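/- arXiv:1308.5373 — 4 statements merged into one kernel-verified Lean document; each statement's English description precedes it below -/
import Mathlib

section
/- Let p be an odd prime, m ≥ 3 odd, q = p^m, and h a positive integer with gcd(m,h) = 1. For (a,b) ∈ GF(q)² let c(a,b) ∈ GF(p)^{q−1} be the word with c(a,b)_i = Tr(a α^{i(p^h+1)}) + Tr(b α^{2i}) for 0 ≤ i ≤ q−2. Then the map (a,b) ↦ c(a,b) is injective (so the code C_{(p^h+1,2,p,m)} = {c(a,b)} has dimension 2m), and the number of pairs (a,b) ∈ GF(q)² with wt(c(a,b)) = w equals: 1 if w = 0; (1/2)(p^m−1)(p^{m−1}+p^{(m−1)/2}) if w = (p−1)(p^{m−1}−p^{(m−1)/2}); (p^m−1)(p^m−p^{m−1}+1) if w = (p−1)p^{m−1}; (1/2)(p^m−1)(p^{m−1}−p^{(m−1)/2}) if w = (p−1)(p^{m−1}+p^{(m−1)/2}); and 0 for every other value of w. -/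
open Finset in
lemma qgauss {p : ℕ} [Fact p.Prime] (hp : Odd p) (a : ZMod p) (ha : a ≠ 0) :
    ∑ t : ZMod p, ZMod.stdAddChar (a * (t * t)) =
      ((quadraticChar (ZMod p) a : ℤ) : ℂ) *
        gaussSum ((quadraticChar (ZMod p)).ringHomComp (Int.castRingHom ℂ)) ZMod.stdAddChar := by
  have hch : ringChar (ZMod p) ≠ 2 := by
    rw [ZMod.ringChar_zmod_n]; rintro rfl; exact absurd hp (by decide)
  have h1 : ∑ t : ZMod p, ZMod.stdAddChar (a * (t * t)) =
      ∑ s : ZMod p, (((quadraticChar (ZMod p) s : ℤ) : ℂ) + 1) * ZMod.stdAddChar (a * s) := by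
    rw [← Finset.sum_fiberwise (s := univ) (g := fun t : ZMod p => t ^ 2)]
    refine Finset.sum_congr rfl fun s _ => ?_
    have h2 := quadraticChar_card_sqrts hch s
    rw [Finset.sum_congr rfl (g := fun _ => ZMod.stdAddChar (a * s))]
    · rw [Finset.sum_const, nsmul_eq_mul]
      congr 1
      have h3 : (#{x : ZMod p | x ^ 2 = s} : ℤ) = quadraticChar (ZMod p) s + 1 := by
        rw [← h2]; congr 2; ext; simp
      exact_mod_cast h3
    · intro x hx
      simp at hx
      rw [← hx, sq]
  have h4 : ∑ s : ZMod p, (ZMod.stdAddChar (a * s) : ℂ) = 0 := by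
    have := AddChar.sum_mulShift a (ZMod.isPrimitive_stdAddChar p)
    simp only [ha, if_false] at this
    simpa [mul_comm] using this
  rw [h1]
  simp only [add_mul, one_mul, Finset.sum_add_distrib, h4, add_zero]
  have h5 := gaussSum_mulShift ((quadraticChar (ZMod p)).ringHomComp (Int.castRingHom ℂ))
    (ZMod.stdAddChar (N := p)) (Units.mk0 a ha)
  rw [← h5]
  simp only [Units.val_mk0, MulChar.ringHomComp_apply, ← mul_assoc]
  have h6 : ((quadraticChar (ZMod p) a : ℤ) : ℂ) * ((quadraticChar (ZMod p) a : ℤ) : ℂ) = 1 := by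
    have := quadraticChar_sq_one ha
    rw [← sq]; exact_mod_cast this
  simp only [gaussSum, Int.coe_castRingHom, h6, one_mul]
  rfl

lemma addChar_map_sum {R S ι : Type*} [AddCommMonoid R] [CommMonoid S] (ψ : AddChar R S)
    (f : ι → R) (s : Finset ι) : ψ (∑ i ∈ s, f i) = ∏ i ∈ s, ψ (f i) := by
  classical
  induction s using Finset.induction_on with
  | empty => simp
  | insert a s ha ih => rw [Finset.sum_insert ha, Finset.prod_insert ha, AddChar.map_add_eq_mul, ih]

open Finset in
lemma diag_count {p : ℕ} [Fact p.Prime] (hp : Odd p) {n : ℕ} (w : Fin n → ZMod p)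
    (N r : ℕ) (hN : N = #{v : Fin n → ZMod p | ∑ i, w i * (v i * v i) = 0})
    (hr : r = #{i | w i ≠ 0}) :
    (Odd r → p * N = p ^ n) ∧
    (∀ k, r = 2 * k → ∃ ε : ℤ, (ε = 1 ∨ ε = -1) ∧
      (p * N : ℤ) = p ^ n + ε * (p - 1) * p ^ (n - k)) := by
  classical
  have hch : ringChar (ZMod p) ≠ 2 := by
    rw [ZMod.ringChar_zmod_n]; rintro rfl; exact absurd hp (by decide)
  set χ := quadraticChar (ZMod p) with hχ
  set G := gaussSum (χ.ringHomComp (Int.castRingHom ℂ)) (ZMod.stdAddChar (N := p)) with hG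
  have hG2 : G ^ 2 = ((χ (-1) : ℤ) : ℂ) * p := by
    have := gaussSum_sq (χ := χ.ringHomComp (Int.castRingHom ℂ)) 
      ((MulChar.ringHomComp_ne_one_iff (RingHom.injective_int _)).mpr (quadraticChar_ne_one hch))
      ((quadraticChar_isQuadratic (ZMod p)).comp _) (ZMod.isPrimitive_stdAddChar p)
    rw [hG, this]; simp [ZMod.card]
  have h1 : ((p * N : ℕ) : ℂ) = ∑ y : ZMod p, ∏ i, ∑ t : ZMod p, ZMod.stdAddChar (y * w i * (t * t)) := by
    have : ∀ y : ZMod p, ∏ i, ∑ t : ZMod p, (ZMod.stdAddChar (y * w i * (t * t)) : ℂ) =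
        ∑ v : Fin n → ZMod p, ZMod.stdAddChar (y * ∑ i, w i * (v i * v i)) := by
      intro y
      rw [Finset.prod_univ_sum, Fintype.piFinset_univ]
      refine Finset.sum_congr rfl fun v _ => ?_
      rw [Finset.mul_sum, addChar_map_sum]
      refine Finset.prod_congr rfl fun i _ => by rw [mul_assoc]
    simp only [this]
    rw [Finset.sum_comm]
    simp only [AddChar.sum_mulShift _ (ZMod.isPrimitive_stdAddChar p)]
    simp only [ZMod.card, Nat.cast_ite, Nat.cast_zero]
    rw [← Finset.sum_filter, Finset.sum_const, ← hN]
    simp [mul_comm]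
  have hrn : r + #{i | w i = 0} = n := by
    rw [hr, add_comm]
    have := Finset.card_filter_add_card_filter_not (s := (univ : Finset (Fin n))) (fun i => w i = 0)
    simpa using this
  set E : ℤ := ∏ i with w i ≠ 0, χ (w i) with hE
  have hE1 : E = 1 ∨ E = -1 := by
    have : E ^ 2 = 1 := by
      rw [hE, ← Finset.prod_pow]
      refine Finset.prod_eq_one fun i hi => quadraticChar_sq_one (by simpa using hi)
    exact sq_eq_one_iff.mp this
  have h2 : ∀ y : ZMod p, y ≠ 0 → ∏ i, ∑ t : ZMod p, (ZMod.stdAddChar (y * w i * (t * t)) : ℂ) =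
      p ^ (n - r) * ((χ y : ℤ) : ℂ) ^ r * E * G ^ r := by
    intro y hy
    rw [← Finset.prod_filter_mul_prod_filter_not univ (fun i => w i = 0)]
    rw [Finset.prod_congr rfl (g := fun _ => (p : ℂ)),
      Finset.prod_congr (s₁ := filter (fun i => ¬ w i = 0) _) rfl (g := fun i => ((χ y : ℤ) : ℂ) * ((χ (w i) : ℤ) : ℂ) * G)]
    · rw [Finset.prod_mul_distrib, Finset.prod_mul_distrib]
      simp only [Finset.prod_const, hE]
      push_cast
      rw [← hr, show #{i | w i = 0} = n - r by omega]
      ring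
    · intro i hi
      simp at hi
      rw [qgauss hp _ (mul_ne_zero hy hi)]
      rw [map_mul]; push_cast; rfl
    · intro i hi
      simp at hi
      simp [hi, ZMod.card]
  have h3 : ((p * N : ℕ) : ℂ) = p ^ n + p ^ (n - r) * E * G ^ r * ∑ y ∈ univ.erase (0 : ZMod p), ((χ y : ℤ) : ℂ) ^ r := by
    rw [h1, ← Finset.add_sum_erase univ _ (Finset.mem_univ (0 : ZMod p))]
    congr 1
    · simp [ZMod.card]
    · rw [Finset.mul_sum]
      refine Finset.sum_congr rfl fun y hy => ?_
      rw [h2 y (by simpa using hy)]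
      ring
  have hsq : ∀ y : ZMod p, y ≠ 0 → (χ y) ^ 2 = 1 := fun y hy => quadraticChar_sq_one hy
  constructor
  · rintro ⟨k, hk⟩
    have : ∑ y ∈ univ.erase (0 : ZMod p), ((χ y : ℤ) : ℂ) ^ r = 0 := by
      have h4 : ∑ y ∈ univ.erase (0 : ZMod p), ((χ y : ℤ)) ^ r = 0 := by
        rw [Finset.sum_congr rfl (g := fun y => χ y)]
        · have := quadraticChar_sum_zero hch
          rw [← Finset.add_sum_erase univ _ (Finset.mem_univ (0 : ZMod p))] at this
          rwa [MulChar.map_zero, zero_add] at this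
        · intro y hy
          rw [hk, pow_succ, pow_mul, hsq y (by simpa using hy)]; simp
      exact_mod_cast h4
    rw [this, mul_zero, add_zero] at h3
    exact_mod_cast h3
  · intro k hk
    have : ∑ y ∈ univ.erase (0 : ZMod p), ((χ y : ℤ) : ℂ) ^ r = (p : ℂ) - 1 := by
      rw [Finset.sum_congr rfl (g := fun y => 1)]
      · simp [ZMod.card]
        rw [Nat.cast_sub (Nat.Prime.one_le Fact.out)]; simp
      · intro y hy
        have := hsq y (by simpa using hy)
        rw [hk, pow_mul]
        rw [show ((χ y : ℤ) : ℂ) ^ 2 = 1 by exact_mod_cast this]; simp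
    rw [this, hk, pow_mul, hG2, mul_pow] at h3
    have hm1 : χ (-1) ^ k = 1 ∨ χ (-1) ^ k = -1 := by
      apply sq_eq_one_iff.mp
      rw [← pow_mul, mul_comm, pow_mul, hsq _ (by simp), one_pow]
    refine ⟨E * χ (-1) ^ k, ?_, ?_⟩
    · rcases hE1 with h | h <;> rcases hm1 with h' | h' <;> simp [h, h']
    · have h5 : (p : ℂ) ^ (n - k) = p ^ (n - 2 * k) * p ^ k := by
        rw [← pow_add]; congr 1; omega
      have : ((p * N : ℕ) : ℂ) = p ^ n + (E * χ (-1) ^ k) * (p - 1) * p ^ (n - k) := by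
        rw [h3, h5]; ring
      exact_mod_cast this

open Finset in
lemma form_count {p : ℕ} [Fact p.Prime] (hp : Odd p) {m : ℕ} (hm : Odd m)
    {V : Type*} [AddCommGroup V] [Fintype V] [Module (ZMod p) V]
    (hV : Module.finrank (ZMod p) V = m) (Q : QuadraticForm (ZMod p) V)
    (hR : Nat.card {x : V // ∀ z, QuadraticMap.polar Q x z = 0} < p ^ 3) (N : ℕ)
    (hN : N = Nat.card {x : V // Q x = 0}) :
    ∃ ε : ℤ, (ε = 0 ∨ ε = 1 ∨ ε = -1) ∧
      (N : ℤ) = p ^ (m - 1) + ε * (p - 1) * p ^ ((m - 1) / 2) := by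
  classical
  have hp1 : 1 < p := Nat.Prime.one_lt Fact.out
  have hp0 : (p : ℤ) ≠ 0 := by positivity
  have : Invertible (2 : ZMod p) := invertibleOfNonzero (by
    intro h
    have : ((2 : ℕ) : ZMod p) = 0 := by exact_mod_cast h
    rw [ZMod.natCast_eq_zero_iff] at this
    have := Nat.le_of_dvd (by norm_num) this
    obtain rfl : p = 2 := by omega
    exact absurd hp (by decide))
  have hwe := QuadraticForm.equivalent_weightedSumSquares Q
  rw [hV] at hwe
  obtain ⟨w, ⟨e⟩⟩ := hwe
  have hNe : N = #{v : Fin m → ZMod p | ∑ i, w i * (v i * v i) = 0} := by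
    rw [hN, ← Fintype.card_subtype, ← Nat.card_eq_fintype_card]
    refine Nat.card_congr (e.toLinearEquiv.toEquiv.subtypeEquiv fun x => ?_)
    have := e.map_app x
    rw [QuadraticMap.weightedSumSquares_apply] at this
    rw [← this]
    rfl
  set r := #{i | w i ≠ 0} with hr
  have hrn : r + #{i | w i = 0} = m := by
    rw [hr, add_comm]
    have := Finset.card_filter_add_card_filter_not (s := (univ : Finset (Fin m))) (fun i => w i = 0)
    simpa using this
  have hd : #{i | w i = 0} < 3 := by
    have h1 : p ^ #{i | w i = 0} ≤ Nat.card {x : V // ∀ z, QuadraticMap.polar Q x z = 0} := by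
      have h2 : Nat.card ({i // w i = 0} → ZMod p) = p ^ #{i | w i = 0} := by
        simp [Fintype.card_subtype]
      rw [← h2]
      let g : ({i // w i = 0} → ZMod p) → (Fin m → ZMod p) := fun f i =>
        if hi : w i = 0 then f ⟨i, hi⟩ else 0
      refine Nat.card_le_card_of_injective (fun f => ⟨e.symm (g f), fun z => ?_⟩) ?_
      · have key : ∀ y, Q y = ∑ i, w i * (e y i * e y i) := by
          intro y
          have := e.map_app y
          rw [QuadraticMap.weightedSumSquares_apply] at this
          rw [← this]; rfl
        have hee : e (e.symm (g f)) = g f := e.toLinearEquiv.apply_symm_apply _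
        have hadd : e (e.symm (g f) + z) = g f + e z := by
          refine (e.toLinearEquiv.map_add (e.symm (g f)) z).trans ?_
          change e (e.symm (g f)) + e z = _
          rw [hee]
        rw [QuadraticMap.polar, key, key, key, hadd, hee, ← Finset.sum_sub_distrib, ← Finset.sum_sub_distrib]
        refine Finset.sum_eq_zero fun i _ => ?_
        by_cases hi : w i = 0
        · simp [hi]
        · simp [g, hi]
      · intro f f' hff
        have h3 : g f = g f' := e.symm.toLinearEquiv.injective (congrArg Subtype.val hff)
        funext i
        have := congrFun h3 i.1
        simpa [g, i.2] using this
    exact (Nat.pow_lt_pow_iff_right hp1).mp (lt_of_le_of_lt h1 hR)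
  obtain ⟨ho, he⟩ := diag_count hp w N r hNe hr
  obtain ⟨k, hk⟩ := hm
  have hpm : (p : ℤ) ^ m = p * p ^ (m - 1) := by
    rw [← pow_succ']; congr 1; omega
  rcases Nat.even_or_odd r with hev | hod
  · obtain ⟨l, hl⟩ := hev
    obtain ⟨ε, hε, hN'⟩ := he l (by omega)
    refine ⟨ε, Or.inr hε, ?_⟩
    have : m - l = (m - 1) / 2 + 1 := by omega
    rw [this, hpm, pow_succ'] at hN'
    apply mul_left_cancel₀ hp0
    rw [hN']; ring
  · refine ⟨0, Or.inl rfl, ?_⟩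
    apply mul_left_cancel₀ hp0
    have : (p * N : ℤ) = p ^ m := by exact_mod_cast ho hod
    rw [this, hpm]; ring

section sigma
variable {p : ℕ} [Fact p.Prime] {F : Type*} [Field F] [Fintype F] [Algebra (ZMod p) F]

lemma tr_zero (a : F) (h : ∀ z : F, Algebra.trace (ZMod p) F (a * z) = 0) : a = 0 := by
  have := traceForm_nondegenerate (ZMod p) F
  exact this.1 a (fun z => by simpa [Algebra.traceForm_apply] using h z)

/-- the bilinear form underlying the quadratic form -/
noncomputable def bilin (σ : F ≃ₐ[ZMod p] F) (a b : F) : LinearMap.BilinMap (ZMod p) F (ZMod p) :=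
  LinearMap.mk₂ (ZMod p) (fun x y => Algebra.trace (ZMod p) F (a * (σ x * y) + b * (x * y)))
    (by intro x y z; rw [← map_add]; congr 1; rw [map_add]; ring)
    (by intro c x z; rw [← map_smul]; congr 1; rw [map_smul]; simp only [Algebra.smul_def]; ring)
    (by intro x y z; rw [← map_add]; congr 1; ring)
    (by intro c x z; rw [← map_smul]; congr 1; simp only [Algebra.smul_def]; ring)

lemma rad_card (hp : Odd p) (σ : F ≃ₐ[ZMod p] F)
    (hσ : ∀ x, σ x = x → ∃ t : ZMod p, algebraMap (ZMod p) F t = x) (a b : F)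
    (hab : a ≠ 0 ∨ b ≠ 0) :
    Nat.card {x : F // ∀ z, QuadraticMap.polar (bilin σ a b).toQuadraticMap x z = 0} < p ^ 3 := by
  classical
  have hp1 : 1 < p := Nat.Prime.one_lt Fact.out
  have h2 : (2 : F) ≠ 0 := by
    intro h
    have h' : algebraMap (ZMod p) F ((2 : ℕ) : ZMod p) = 0 := by
      rw [map_natCast]; exact_mod_cast h
    rw [map_eq_zero, ZMod.natCast_eq_zero_iff] at h'
    have := Nat.le_of_dvd (by norm_num) h'
    obtain rfl : p = 2 := by omega
    exact absurd hp (by decide)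
  have key : ∀ x, (∀ z, QuadraticMap.polar (bilin σ a b).toQuadraticMap x z = 0) →
      σ a * σ (σ x) + 2 * σ b * σ x + a * x = 0 := by
    intro x hx
    apply tr_zero (p := p)
    intro z'
    obtain ⟨z, rfl⟩ := σ.surjective z'
    rw [← hx z, LinearMap.BilinMap.polar_toQuadraticMap]
    simp only [bilin, LinearMap.mk₂_apply]
    rw [← map_add, show a * (σ x * z) + b * (x * z) + (a * (σ z * x) + b * (z * x))
      = (a * (σ x * z) + 2 * b * (x * z)) + a * x * σ z by ring, map_add,
      ← Algebra.trace_eq_of_algEquiv σ (a * (σ x * z) + 2 * b * (x * z)), ← map_add]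
    congr 1
    simp only [map_add, map_mul, map_ofNat]
    ring
  by_cases ha : a = 0
  · have hb : b ≠ 0 := by tauto
    have : Subsingleton {x : F // ∀ z, QuadraticMap.polar (bilin σ a b).toQuadraticMap x z = 0} := by
      suffices H : ∀ x : {x : F // ∀ z, QuadraticMap.polar (bilin σ a b).toQuadraticMap x z = 0}, x.1 = 0 from
        ⟨fun x y => Subtype.ext (by rw [H x, H y])⟩
      rintro ⟨x, hx⟩
      have := key x hx
      simpa [ha, h2, hb] using this
    have h1 := Finite.card_le_one_iff_subsingleton.mpr this
    exact lt_of_le_of_lt h1 (Nat.one_lt_pow (by norm_num) hp1)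
  · have hlt : p ^ 2 < p ^ 3 := Nat.pow_lt_pow_right hp1 (by norm_num)
    refine lt_of_le_of_lt ?_ hlt
    by_cases hex : ∃ x0 : F, x0 ≠ 0 ∧ ∀ z, QuadraticMap.polar (bilin σ a b).toQuadraticMap x0 z = 0
    · obtain ⟨x, hx0, hx⟩ := hex
      have k1 := key x hx
      have hu : ∀ y, (∀ z, QuadraticMap.polar (bilin σ a b).toQuadraticMap y z = 0) →
          ∃ t : ZMod p, algebraMap (ZMod p) F t = a * (σ x * y - x * σ y) := by
        intro y hy
        have k2 := key y hy
        apply hσ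
        simp only [map_mul, map_sub]
        linear_combination σ y * k1 - σ x * k2
      choose! f hf using hu
      have hker : ∀ y, a * (σ x * y - x * σ y) = 0 → ∃ t : ZMod p, algebraMap (ZMod p) F t = y / x := by
        intro y hy
        apply hσ
        have : σ x ≠ 0 := by simpa using hx0
        rw [map_div₀]
        have := (mul_eq_zero.mp hy).resolve_left ha
        field_simp
        linear_combination - this
      -- choose a preimage for every value
      let R := {x : F // ∀ z, QuadraticMap.polar (bilin σ a b).toQuadraticMap x z = 0}
      let g : ZMod p → F := fun t => if h : ∃ y : R, f y = t then (h.choose : F) else 0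
      have hg : ∀ y : R, ∃ t : ZMod p, algebraMap (ZMod p) F t = (y.1 - g (f y)) / x := by
        intro y
        have hex : ∃ y' : R, f y' = f y := ⟨y, rfl⟩
        have hgy : g (f y) = hex.choose := by simp only [g]; rw [dif_pos hex]
        apply hker
        have e1 := hf y.1 y.2
        have e2 := hf hex.choose.1 hex.choose.2
        rw [hex.choose_spec, ← hgy] at e2
        simp only [map_sub]
        linear_combination e2 - e1
      choose t ht using hg
      have hinj : Function.Injective (fun y : R => (f y, t y)) := by
        intro y y' hyy
        have h3 : f y = f y' := congrArg Prod.fst hyy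
        have h4 : t y = t y' := congrArg Prod.snd hyy
        have e1 := ht y
        have e2 := ht y'
        rw [h4, e2, h3] at e1
        field_simp at e1
        exact Subtype.ext (by linear_combination -e1)
      have := Nat.card_le_card_of_injective _ hinj
      simpa [sq] using this
    · push Not at hex
      have : Subsingleton {x : F // ∀ z, QuadraticMap.polar (bilin σ a b).toQuadraticMap x z = 0} := by
        suffices H : ∀ x : {x : F // ∀ z, QuadraticMap.polar (bilin σ a b).toQuadraticMap x z = 0}, x.1 = 0 from
          ⟨fun x y => Subtype.ext (by rw [H x, H y])⟩
        rintro ⟨x, hx⟩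
        by_contra hne
        obtain ⟨z, hz⟩ := hex x hne
        exact hz (hx z)
      have h1 := Finite.card_le_one_iff_subsingleton.mpr this
      exact h1.trans (Nat.one_le_pow _ _ (by omega))

end sigma

section moments
set_option linter.unusedSectionVars false
variable {p : ℕ} [Fact p.Prime] {F : Type*} [Field F] [Fintype F] [Algebra (ZMod p) F]

lemma ker_card_mul {K V W : Type*} [Field K] [AddCommGroup V] [Module K V] [AddCommGroup W]
    [Module K W] (f : V →ₗ[K] W) (hf : Function.Surjective f) :
    Nat.card {v // f v = 0} * Nat.card W = Nat.card V := by
  rw [Submodule.card_eq_card_quotient_mul_card (LinearMap.ker f),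
    Nat.card_congr (f.quotKerEquivOfSurjective hf).toEquiv, mul_comm]
  first
  | rfl
  | (rw [mul_comm]; rfl)

/-- the functional of a point -/
noncomputable def Lf (σ : F ≃ₐ[ZMod p] F) (x : F) : F × F →ₗ[ZMod p] ZMod p where
  toFun ab := Algebra.trace (ZMod p) F (ab.1 * (σ x * x) + ab.2 * (x * x))
  map_add' u v := by rw [← map_add]; congr 1; simp only [Prod.fst_add, Prod.snd_add]; ring
  map_smul' t v := by
    rw [RingHom.id_apply, ← map_smul]; congr 1
    simp only [Prod.smul_fst, Prod.smul_snd]; simp only [Algebra.smul_def]; ring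

lemma Lf_apply (σ : F ≃ₐ[ZMod p] F) (x : F) (ab : F × F) :
    Lf σ x ab = Algebra.trace (ZMod p) F (ab.1 * (σ x * x) + ab.2 * (x * x)) := rfl

lemma bilin_eq (σ : F ≃ₐ[ZMod p] F) (x : F) (ab : F × F) :
    (bilin σ ab.1 ab.2).toQuadraticMap x = Lf σ x ab := by
  simp [LinearMap.BilinMap.toQuadraticMap_apply, bilin, Lf_apply]

lemma Lf_surj (σ : F ≃ₐ[ZMod p] F) (x : F) (hx : x ≠ 0) : Function.Surjective (Lf σ x) := by
  intro t
  obtain ⟨z, hz⟩ := Algebra.trace_surjective (ZMod p) F t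
  refine ⟨(0, z / (x * x)), ?_⟩
  rw [Lf_apply, ← hz]
  congr 1
  field_simp
  ring

lemma Lf_pair_surj (σ : F ≃ₐ[ZMod p] F)
    (hσ : ∀ x, σ x = x → ∃ t : ZMod p, algebraMap (ZMod p) F t = x) (x y : F) (hx : x ≠ 0)
    (hxy : ¬ ∃ t : ZMod p, y = algebraMap (ZMod p) F t * x) :
    Function.Surjective ((Lf σ x).prod (Lf σ y)) := by
  have hy : y ≠ 0 := by
    rintro rfl; exact hxy ⟨0, by simp⟩
  rw [← LinearMap.range_eq_top]
  by_contra hne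
  obtain ⟨φ, hφ0, hφ⟩ := Submodule.exists_le_ker_of_lt_top _ (lt_top_iff_ne_top.mpr hne)
  set l := φ (1, 0) with hl
  set k := φ (0, 1) with hk
  have hφe : ∀ u v, φ (u, v) = u * l + v * k := by
    intro u v
    have : ((u, v) : ZMod p × ZMod p) = u • (1, 0) + v • (0, 1) := by simp
    rw [this, map_add, map_smul, map_smul]; rfl
  have h0 : ∀ ab, Lf σ x ab * l + Lf σ y ab * k = 0 := by
    intro ab
    rw [← hφe]
    exact hφ ⟨ab, rfl⟩
  set L := algebraMap (ZMod p) F l with hL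
  set K := algebraMap (ZMod p) F k with hK
  have h1 : L * (σ x * x) + K * (σ y * y) = 0 := by
    apply tr_zero (p := p)
    intro z
    have := h0 (z, 0)
    rw [mul_comm, mul_comm _ k, ← smul_eq_mul, ← smul_eq_mul, Lf_apply, Lf_apply, ← map_smul, ← map_smul,
      ← map_add] at this
    rw [← this]; congr 1
    simp only [Algebra.smul_def]; ring
  have h2 : L * (x * x) + K * (y * y) = 0 := by
    apply tr_zero (p := p)
    intro z
    have := h0 (0, z)
    rw [mul_comm, mul_comm _ k, ← smul_eq_mul, ← smul_eq_mul, Lf_apply, Lf_apply, ← map_smul, ← map_smul,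
      ← map_add] at this
    rw [← this]; congr 1
    simp only [Algebra.smul_def]; ring
  have hk0 : K ≠ 0 := by
    intro h
    have hl0 : L = 0 := by simpa [h, hx] using h2
    apply hφ0
    ext
    · simpa [hL] using hl0
    · simpa [hK] using h
  have h3 : σ (y / x) = y / x := by
    have hsx : σ x ≠ 0 := by simpa using hx
    rw [map_div₀]
    field_simp
    have : K * y * (σ y * x - y * σ x) = 0 := by
      linear_combination x * h1 - σ x * h2
    have := (mul_eq_zero.mp this).resolve_left (mul_ne_zero hk0 hy)
    linear_combination this
  obtain ⟨t, ht⟩ := hσ _ h3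
  exact hxy ⟨t, by rw [ht]; field_simp⟩

lemma card1 (σ : F ≃ₐ[ZMod p] F) (x : F) (hx : x ≠ 0) :
    Nat.card {ab : F × F // Lf σ x ab = 0} * p = Fintype.card F ^ 2 := by
  have := ker_card_mul (Lf σ x) (Lf_surj σ x hx)
  simpa [sq] using this

lemma card2 (σ : F ≃ₐ[ZMod p] F)
    (hσ : ∀ x, σ x = x → ∃ t : ZMod p, algebraMap (ZMod p) F t = x) (x y : F) (hx : x ≠ 0)
    (hxy : ¬ ∃ t : ZMod p, y = algebraMap (ZMod p) F t * x) :
    Nat.card {ab : F × F // Lf σ x ab = 0 ∧ Lf σ y ab = 0} * p ^ 2 = Fintype.card F ^ 2 := by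
  have := ker_card_mul _ (Lf_pair_surj σ hσ x y hx hxy)
  simpa [sq, Prod.ext_iff] using this

lemma card2' (σ : F ≃ₐ[ZMod p] F) (x y : F) (hx : x ≠ 0)
    (hxy : ∃ t : ZMod p, y = algebraMap (ZMod p) F t * x) :
    Nat.card {ab : F × F // Lf σ x ab = 0 ∧ Lf σ y ab = 0} * p = Fintype.card F ^ 2 := by
  rw [← card1 σ x hx]
  congr 1
  refine Nat.card_congr (Equiv.subtypeEquivRight fun ab => ?_)
  obtain ⟨t, rfl⟩ := hxy
  have : Lf σ (algebraMap (ZMod p) F t * x) ab = (t * t) • Lf σ x ab := by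
    rw [Lf_apply, Lf_apply, ← map_smul]
    congr 1
    simp only [Algebra.smul_def, map_mul, AlgEquiv.commutes]; ring
  rw [this]
  constructor
  · exact fun h => h.1
  · intro h; exact ⟨h, by rw [h, smul_zero]⟩

open Finset in
lemma moment1 [DecidableEq F] (σ : F ≃ₐ[ZMod p] F) :
    p * ∑ ab : F × F, #{x | Lf σ x ab = 0} =
      p * Fintype.card F ^ 2 + (Fintype.card F - 1) * Fintype.card F ^ 2 := by
  have h1 : ∑ ab : F × F, #{x | Lf σ x ab = 0} = ∑ x : F, #{ab | Lf σ x ab = 0} := by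
    simp only [Finset.card_filter]
    exact Finset.sum_comm
  rw [h1, ← Finset.add_sum_erase univ _ (Finset.mem_univ (0 : F)), mul_add]
  congr 1
  · congr 1
    simp [Lf_apply, sq]
  · rw [Finset.mul_sum, Finset.sum_congr rfl (g := fun _ => Fintype.card F ^ 2)]
    · simp [Finset.card_erase_of_mem]
    · intro x hx
      rw [← card1 σ x (by simpa using hx), Nat.card_eq_fintype_card, Fintype.card_subtype, mul_comm]

open Finset in
lemma moment2 [DecidableEq F] (σ : F ≃ₐ[ZMod p] F)
    (hσ : ∀ x, σ x = x → ∃ t : ZMod p, algebraMap (ZMod p) F t = x) :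
    p ^ 2 * ∑ ab : F × F, #{x | Lf σ x ab = 0} ^ 2 =
      p * (p * Fintype.card F ^ 2 + (Fintype.card F - 1) * Fintype.card F ^ 2) +
      (Fintype.card F - 1) * (p ^ 2 * Fintype.card F ^ 2 + (Fintype.card F - p) * Fintype.card F ^ 2) := by
  classical
  have h1 : ∑ ab : F × F, #{x | Lf σ x ab = 0} ^ 2 =
      ∑ x : F, ∑ y : F, #{ab | Lf σ x ab = 0 ∧ Lf σ y ab = 0} := by
    simp only [Finset.card_filter, sq, Finset.sum_mul_sum]
    rw [Finset.sum_comm]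
    refine Finset.sum_congr rfl fun x _ => ?_
    rw [Finset.sum_comm]
    refine Finset.sum_congr rfl fun y _ => Finset.sum_congr rfl fun ab _ => ?_
    by_cases h1 : Lf σ x ab = 0 <;> by_cases h2 : Lf σ y ab = 0 <;> simp [h1, h2]
  rw [h1, ← Finset.add_sum_erase univ _ (Finset.mem_univ (0 : F)), mul_add]
  congr 1
  · rw [← moment1 σ, sq, mul_assoc]
    congr 2
    have h1 : ∑ ab : F × F, #{x | Lf σ x ab = 0} = ∑ x : F, #{ab | Lf σ x ab = 0} := by
      simp only [Finset.card_filter]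
      exact Finset.sum_comm
    rw [h1]
    refine Finset.sum_congr rfl fun y _ => ?_
    simp [Lf_apply]
  · rw [Finset.mul_sum, Finset.sum_congr rfl
      (g := fun _ => (p ^ 2 * Fintype.card F ^ 2 + (Fintype.card F - p) * Fintype.card F ^ 2))]
    · simp [Finset.card_erase_of_mem]
    · intro x hx
      have hx0 : x ≠ 0 := by simpa using hx
      have hcard : #{y | ∃ t : ZMod p, y = algebraMap (ZMod p) F t * x} = p := by
        have : ({y | ∃ t : ZMod p, y = algebraMap (ZMod p) F t * x} : Finset F) =
            univ.image (fun t : ZMod p => algebraMap (ZMod p) F t * x) := by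
          ext y; simp [eq_comm]
        rw [this, Finset.card_image_of_injective]
        · simp [ZMod.card]
        · intro t t' h
          exact (algebraMap (ZMod p) F).injective (mul_right_cancel₀ hx0 h)
      have hcard' := Finset.card_filter_add_card_filter_not (s := (univ : Finset F))
        (fun y => ∃ t : ZMod p, y = algebraMap (ZMod p) F t * x)
      rw [hcard, Finset.card_univ] at hcard'
      rw [← Finset.sum_filter_add_sum_filter_not univ
        (fun y => ∃ t : ZMod p, y = algebraMap (ZMod p) F t * x), mul_add]
      congr 1
      · rw [Finset.mul_sum, Finset.sum_congr rfl (g := fun _ => p * Fintype.card F ^ 2)]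
        · rw [Finset.sum_const, hcard, smul_eq_mul]; ring
        · intro y hy
          rw [← card2' σ x y hx0 (by simpa using hy), Nat.card_eq_fintype_card, Fintype.card_subtype]
          ring
      · rw [Finset.mul_sum, Finset.sum_congr rfl (g := fun _ => Fintype.card F ^ 2)]
        · rw [Finset.sum_const, smul_eq_mul]; congr 1; omega
        · intro y hy
          rw [← card2 σ hσ x y hx0 (by simpa using hy), Nat.card_eq_fintype_card, Fintype.card_subtype]
          ring

end moments

lemma sigma_exists {p : ℕ} [Fact p.Prime] {m h : ℕ} (hmh : Nat.gcd m h = 1)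
    {F : Type*} [Field F] [Fintype F] [Algebra (ZMod p) F]
    (hF : Fintype.card F = p ^ m) :
    ∃ σ : F ≃ₐ[ZMod p] F, (∀ x, σ x = x ^ (p ^ h)) ∧
      ∀ x, σ x = x → ∃ t : ZMod p, algebraMap (ZMod p) F t = x := by
  refine ⟨FiniteField.frobeniusAlgEquivOfAlgebraic (ZMod p) F ^ h, ?_, ?_⟩
  · intro x
    rw [AlgEquiv.coe_pow, FiniteField.coe_frobeniusAlgEquivOfAlgebraic_iterate, ZMod.card]
  · intro x hx
    set τ := FiniteField.frobeniusAlgEquivOfAlgebraic (ZMod p) F with hτ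
    have h1 : Function.IsPeriodicPt τ h x := by
      rw [AlgEquiv.coe_pow] at hx; exact hx
    have h2 : Function.IsPeriodicPt τ m x := by
      change (τ)^[m] x = x
      rw [hτ, FiniteField.coe_frobeniusAlgEquivOfAlgebraic_iterate, ZMod.card, ← hF]
      exact FiniteField.pow_card x
    have h3 := h2.gcd h1
    rw [hmh] at h3
    have h4 : x ^ p = x := by
      have : τ x = x := h3
      rw [hτ, FiniteField.coe_frobeniusAlgEquivOfAlgebraic, ZMod.card] at this
      exact this
    have : CharP F p := charP_of_injective_algebraMap (algebraMap (ZMod p) F).injective p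
    have h5 := (Subfield.mem_bot_iff_pow_eq_self F p).mpr h4
    have h6 : (⊥ : Subfield F) ≤ (algebraMap (ZMod p) F).fieldRange := bot_le
    obtain ⟨t, ht⟩ := h6 h5
    exact ⟨t, ht⟩

open Finset in
lemma weight_eq {p : ℕ} [Fact p.Prime] {m : ℕ}
    {F : Type*} [Field F] [Fintype F] [DecidableEq F]
    (hF : Fintype.card F = p ^ m)
    (α : Fˣ) (hα : ∀ x : Fˣ, x ∈ Subgroup.zpowers α) (f : F → ZMod p) (hf : f 0 = 0) :
    hammingNorm (fun i : Fin (p ^ m - 1) => f ((α : F) ^ (i : ℕ))) + #{x | f x = 0} = p ^ m := by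
  have hord : orderOf α = p ^ m - 1 := by
    rw [orderOf_eq_card_of_forall_mem_zpowers hα, Nat.card_eq_fintype_card, Fintype.card_units, hF]
  have h1 : hammingNorm (fun i : Fin (p ^ m - 1) => f ((α : F) ^ (i : ℕ))) = #{x | f x ≠ 0} := by
    rw [hammingNorm]
    refine Finset.card_bij (fun i _ => (α : F) ^ (i : ℕ)) ?_ ?_ ?_
    · intro i hi; simpa using hi
    · intro i _ j _ hij
      have : α ^ (i : ℕ) = α ^ (j : ℕ) := by ext; simpa using hij
      apply Fin.ext
      exact pow_injOn_Iio_orderOf (by simp [hord]) (by simp [hord]) this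
    · intro x hx
      have hx' : f x ≠ 0 := by simpa using hx
      have hx0 : x ≠ 0 := by rintro rfl; exact hx' hf
      have := mem_zpowers_iff_mem_range_orderOf.mp (hα (Units.mk0 x hx0))
      simp only [Finset.mem_image, Finset.mem_range] at this
      obtain ⟨k, hk, hkx⟩ := this
      have hkx' : (α : F) ^ k = x := by
        have := congrArg Units.val hkx; simpa using this
      refine ⟨⟨k, by rw [← hord]; exact hk⟩, ?_, hkx'⟩
      simp [hkx', hx']
  rw [h1, add_comm, Finset.card_filter_add_card_filter_not, Finset.card_univ, hF]

/-- Feng–Luo: for `p` an odd prime, `m ≥ 3` odd, `gcd(m,h) = 1`, the map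
`(a,b) ↦ c(a,b)` with `c(a,b)_i = Tr(a α^{i(p^h+1)}) + Tr(b α^{2i})` is injective (so the
code `C_{(p^h+1,2,p,m)}` has dimension `2m`), and its weight distribution is given by
Table II. -/
theorem stmt15 {p : ℕ} [Fact p.Prime] (hp : Odd p)
    {m : ℕ} (hm : Odd m) (hm3 : 3 ≤ m)
    {h : ℕ} (hh : 0 < h) (hmh : Nat.gcd m h = 1)
    {F : Type*} [Field F] [Fintype F] [Algebra (ZMod p) F]
    (hF : Fintype.card F = p ^ m)
    (α : Fˣ) (hα : ∀ x : Fˣ, x ∈ Subgroup.zpowers α)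
    (c : F × F → Fin (p ^ m - 1) → ZMod p)
    (hc : c = fun (ab : F × F) (i : Fin (p ^ m - 1)) =>
      Algebra.trace (ZMod p) F (ab.1 * (α : F) ^ ((i : ℕ) * (p ^ h + 1))) +
        Algebra.trace (ZMod p) F (ab.2 * (α : F) ^ ((i : ℕ) * 2))) :
    Function.Injective c ∧
    ∀ w : ℕ,
      {ab : F × F | hammingNorm (c ab) = w}.ncard =
        if w = 0 then 1
        else if w = (p - 1) * (p ^ (m - 1) - p ^ ((m - 1) / 2)) then
          (p ^ m - 1) * (p ^ (m - 1) + p ^ ((m - 1) / 2)) / 2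
        else if w = (p - 1) * p ^ (m - 1) then
          (p ^ m - 1) * (p ^ m - p ^ (m - 1) + 1)
        else if w = (p - 1) * (p ^ (m - 1) + p ^ ((m - 1) / 2)) then
          (p ^ m - 1) * (p ^ (m - 1) - p ^ ((m - 1) / 2)) / 2
        else 0 := by
  classical
  obtain ⟨σ, hσ, hfix⟩ := sigma_exists hmh hF
  have hp1 : 1 < p := Nat.Prime.one_lt Fact.out
  have hc' : ∀ ab, c ab = fun i : Fin (p ^ m - 1) => Lf σ ((α : F) ^ (i : ℕ)) ab := by
    intro ab
    rw [hc]
    funext i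
    simp only
    rw [Lf_apply, hσ, ← map_add]
    congr 1
    ring
  have hfr : Module.finrank (ZMod p) F = m := by
    have := Module.card_eq_pow_finrank (K := ZMod p) (V := F)
    rw [hF, ZMod.card] at this
    exact (Nat.pow_right_injective hp1 this).symm
  set N : F × F → ℕ := fun ab => Finset.card {x | Lf σ x ab = 0} with hN
  have hwt : ∀ ab, hammingNorm (c ab) + N ab = p ^ m := by
    intro ab
    rw [hc' ab]
    exact weight_eq hF α hα (fun x => Lf σ x ab) (by simp [Lf_apply])
  set P := p ^ ((m - 1) / 2) with hP
  have hPP : p ^ (m - 1) = P * P := by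
    rw [hP, ← pow_add]; congr 1; obtain ⟨k, hk⟩ := hm; omega
  have hPp : p ^ m = p * (P * P) := by
    rw [← hPP, ← pow_succ']; congr 1; omega
  have hP1 : 1 < P := Nat.one_lt_pow (by omega) hp1
  rw [hPP]
  have hval : ∀ ab : F × F, ab ≠ 0 → ∃ ε : ℤ, (ε = 0 ∨ ε = 1 ∨ ε = -1) ∧
      (N ab : ℤ) = P * P + ε * (p - 1) * P := by
    intro ab hab
    have hab' : ab.1 ≠ 0 ∨ ab.2 ≠ 0 := by
      by_contra hcon
      push Not at hcon
      exact hab (Prod.ext hcon.1 hcon.2)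
    have := form_count hp hm hfr _ (rad_card hp σ hfix ab.1 ab.2 hab') (N ab) (by
      simp only [bilin_eq]
      rw [Nat.card_eq_fintype_card, Fintype.card_subtype])
    obtain ⟨ε, hε, hNε⟩ := this
    refine ⟨ε, hε, ?_⟩
    rw [hNε]
    have e1 : (p : ℤ) ^ (m - 1) = P * P := by exact_mod_cast hPP
    have e2 : (p : ℤ) ^ ((m - 1) / 2) = P := by rw [hP]; push_cast; rfl
    rw [e1, e2]
  choose! ε hε hNε using hval
  have hN0 : N 0 = p * (P * P) := by
    simp [hN, Lf_apply, hF, hPp]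
  have hwt' : ∀ ab, ab ≠ 0 → (hammingNorm (c ab) : ℤ) = (p - 1) * (P * P) - ε ab * ((p - 1) * P) := by
    intro ab hab
    have e1 : (hammingNorm (c ab) : ℤ) + N ab = p * (P * P) := by
      exact_mod_cast (hwt ab).trans hPp
    have e2 := hNε ab hab
    linear_combination e1 - e2
  have hPz : (1 : ℤ) < P := by exact_mod_cast hP1
  have hpz : (1 : ℤ) < p := by exact_mod_cast hp1
  have hpP : (0 : ℤ) < (p - 1) * P := by apply mul_pos <;> linarith
  have hPlt : (P : ℤ) < P * P := by nlinarith
  have hwpos : ∀ ab, ab ≠ 0 → hammingNorm (c ab) ≠ 0 := by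
    intro ab hab h0
    have := hwt' ab hab
    rw [h0] at this
    have e3 : ((p : ℤ) - 1) * P < (p - 1) * (P * P) := by
      apply mul_lt_mul_of_pos_left hPlt; linarith
    rcases hε ab hab with h | h | h <;> rw [h] at this <;> push_cast at this <;> linarith
  have hw0 : hammingNorm (c 0) = 0 := by
    have := hwt 0
    rw [hN0] at this
    have h2 := this.trans hPp
    omega
  refine ⟨?_, ?_⟩
  · intro u v huv
    by_contra hne
    apply hwpos (u - v) (sub_ne_zero.mpr hne)
    have : c (u - v) = c u - c v := by
      rw [hc', hc', hc']; funext i; simp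
    rw [this, huv, sub_self]; simp
  -- counting
  set A : ℤ → Finset (F × F) := fun e => {ab | ab ≠ 0 ∧ ε ab = e} with hA
  have hsum : ∀ g : ℤ → ℤ, ∑ ab ∈ Finset.univ.erase (0 : F × F), g (ε ab) =
      g 0 * (A 0).card + g 1 * (A 1).card + g (-1) * (A (-1)).card := by
    intro g
    have h1 : ∀ e : ℤ, g e * (A e).card =
        ∑ ab ∈ Finset.univ.erase (0 : F × F), if ε ab = e then g e else 0 := by
      intro e
      rw [← Finset.sum_filter, Finset.sum_const, nsmul_eq_mul, mul_comm]
      congr 3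
      ext ab; simp [hA]
    rw [h1, h1, h1, ← Finset.sum_add_distrib, ← Finset.sum_add_distrib]
    refine Finset.sum_congr rfl fun ab hab => ?_
    rcases hε ab (by simpa using hab) with h | h | h <;> simp [h]
  have hq : Fintype.card F = p * (P * P) := hF.trans hPp
  have hq1 : 1 ≤ p * (P * P) := Nat.one_le_iff_ne_zero.mpr (by positivity)
  have hqp : p ≤ p * (P * P) := Nat.le_mul_of_pos_right _ (by positivity)
  have hcount : (A 0).card + (A 1).card + (A (-1)).card = ((p * (P * P) : ℤ) ^ 2 - 1) := by
    have := hsum (fun _ => 1)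
    simp only [Finset.sum_const, one_mul] at this
    rw [← this, Finset.card_erase_of_mem (Finset.mem_univ _), Finset.card_univ, Fintype.card_prod, hq,
      nsmul_eq_mul, mul_one, Nat.cast_sub (by nlinarith)]
    push_cast; ring
  have hm1 : (A 1).card - (A (-1)).card = ((p * (P * P) : ℤ) - 1) * P := by
    have e1 := moment1 (F := F) σ
    rw [hq] at e1
    have e2 : (p : ℤ) * ∑ ab : F × F, (N ab : ℤ) =
        p * (p * (P * P)) ^ 2 + (p * (P * P) - 1) * (p * (P * P)) ^ 2 := by
      have := congrArg (Nat.cast : ℕ → ℤ) e1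
      push_cast [Nat.cast_sub hq1] at this
      exact this
    rw [← Finset.add_sum_erase Finset.univ _ (Finset.mem_univ (0 : F × F)), hN0,
      Finset.sum_congr rfl (g := fun ab => (fun e : ℤ => (P * P + e * (p - 1) * P : ℤ)) (ε ab))
        (fun ab hab => hNε ab (by simpa using hab)),
      hsum (fun e : ℤ => (P * P + e * (p - 1) * P : ℤ))] at e2
    push_cast at e2
    have hne : (p : ℤ) * ((p - 1) * P) ≠ 0 := by positivity
    apply mul_left_cancel₀ hne
    linear_combination e2 - p * P * P * hcount
  have hm2 : (A 1).card + (A (-1)).card = ((p * (P * P) : ℤ) - 1) * (P * P) := by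
    have e1 := moment2 (F := F) σ hfix
    rw [hq] at e1
    have e2 : (p : ℤ) ^ 2 * ∑ ab : F × F, (N ab : ℤ) ^ 2 =
        p * (p * (p * (P * P)) ^ 2 + (p * (P * P) - 1) * (p * (P * P)) ^ 2) +
        (p * (P * P) - 1) * (p ^ 2 * (p * (P * P)) ^ 2 + (p * (P * P) - p) * (p * (P * P)) ^ 2) := by
      have := congrArg (Nat.cast : ℕ → ℤ) e1
      push_cast [Nat.cast_sub hq1, Nat.cast_sub hqp] at this
      exact this
    rw [← Finset.add_sum_erase Finset.univ _ (Finset.mem_univ (0 : F × F)), hN0,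
      Finset.sum_congr rfl (g := fun ab => (fun e : ℤ => (P * P + e * (p - 1) * P : ℤ) ^ 2) (ε ab))
        (fun ab hab => by rw [hNε ab (by simpa using hab)]),
      hsum (fun e : ℤ => (P * P + e * (p - 1) * P : ℤ) ^ 2)] at e2
    push_cast at e2
    have hne : ((p : ℤ) * ((p - 1) * P)) ^ 2 ≠ 0 := by positivity
    apply mul_left_cancel₀ hne
    linear_combination e2 - (p * P * P) ^ 2 * hcount - 2 * p ^ 2 * (p - 1) * P ^ 3 * hm1
  -- level sets
  have hset : ∀ (e : ℤ) (w : ℕ), (w : ℤ) = (p - 1) * (P * P) - e * ((p - 1) * P) → w ≠ 0 →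
      {ab : F × F | hammingNorm (c ab) = w}.ncard = (A e).card := by
    intro e w hw hw0'
    rw [← Set.ncard_coe_finset]
    congr 1
    ext ab
    simp only [Set.mem_ofPred_eq, hA, Finset.coe_filter, Finset.mem_univ, true_and]
    constructor
    · intro hab
      have hab0 : ab ≠ 0 := by
        rintro rfl; exact hw0' (hab ▸ hw0)
      refine ⟨hab0, ?_⟩
      have := hwt' ab hab0
      rw [hab, hw] at this
      exact mul_right_cancel₀ hpP.ne' (by linarith)
    · rintro ⟨hab0, he⟩
      have := hwt' ab hab0
      rw [he, ← hw] at this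
      exact_mod_cast this
  have hPle : P ≤ P * P := Nat.le_mul_of_pos_right _ (by omega)
  have hPle2 : P * P ≤ p * (P * P) := Nat.le_mul_of_pos_left _ (by omega)
  intro w
  split_ifs with c0 c1 c2 c3
  · subst c0
    rw [Set.ncard_eq_one]
    refine ⟨0, ?_⟩
    ext ab
    simp only [Set.mem_ofPred_eq, Set.mem_singleton_iff]
    constructor
    · intro hab; by_contra hne; exact hwpos ab hne hab
    · rintro rfl; exact hw0
  · rw [hset 1 w _ c0]
    · rw [hPp]
      symm
      apply Nat.div_eq_of_eq_mul_right (by norm_num)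
      zify [hq1]
      linear_combination -hm1 - hm2
    · rw [c1]; push_cast [Nat.cast_sub hp1.le, Nat.cast_sub hPle]; ring
  · rw [hset 0 w _ c0]
    · rw [hPp]
      zify [hq1, hPle2]
      linear_combination hcount - hm2
    · rw [c2]; push_cast [Nat.cast_sub hp1.le]; ring
  · rw [hset (-1) w _ c0]
    · rw [hPp]
      symm
      apply Nat.div_eq_of_eq_mul_right (by norm_num)
      zify [hq1, hPle]
      linear_combination hm1 - hm2
    · rw [c3]; push_cast [Nat.cast_sub hp1.le]; ring
  · rw [Set.ncard_eq_zero]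
    ext ab
    simp only [Set.mem_ofPred_eq, Set.mem_empty_iff_false, iff_false]
    intro hab
    have hab0 : ab ≠ 0 := by
      rintro rfl; exact c0 (hab ▸ hw0)
    have h1 := hwt' ab hab0
    rw [hab] at h1
    rcases hε ab hab0 with h | h | h <;> rw [h] at h1
    · apply c2; zify [hp1.le]; linear_combination h1
    · apply c1; zify [hp1.le, hPle]; linear_combination h1
    · apply c3; zify [hp1.le]; linear_combination h1
end

section
/- Let m ≥ 3 be odd, q = 3^m, and let h be a positive integer such that h divides m+1 and (m+1)/h is even. Set v = (3^{m+1}−1)/(3^h+1) + (3^m−1)/2 (an integer). Then the number of pairs (a,b) ∈ GF(q)² such that wt(c(a,b)) = w equals: 1 if w = 0; (1/2)(3^m−1)(3^{m−1}+3^{(m−1)/2}) if w = 2(3^{m−1}−3^{(m−1)/2}); (3^m−1)(3^m−3^{m−1}+1) if w = 2·3^{m−1}; (1/2)(3^m−1)(3^{m−1}−3^{(m−1)/2}) if w = 2(3^{m−1}+3^{(m−1)/2}); and 0 for every other value of w. -/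
def RR (t : ZMod 3) : ℤ := if t = 0 then 2 else -1
def II (t : ZMod 3) : ℤ := if t = 0 then 0 else if t = 1 then 1 else -1

lemma RR_add_three (t : ZMod 3) : RR t + RR (t+1) + RR (t+2) = 0 := by
  revert t; decide
lemma RR_II (s t : ZMod 3) : RR s * RR t + 3 * (II s * II t) = 2 * RR (s - t) := by
  revert s t; decide
lemma RR_mul (s t : ZMod 3) : RR s * RR t = RR (s + t) + RR (s - t) := by
  revert s t; decide
lemma RR_neg (t : ZMod 3) : RR (-t) = RR t := by
  revert t; decide

lemma sum_RR_hom {V : Type*} [AddCommGroup V] [Fintype V] (l : V →+ ZMod 3) (c : ZMod 3)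
    (hl : ∃ y, l y ≠ 0) : ∑ y, RR (c + l y) = 0 := by
  obtain ⟨y, hy⟩ := hl
  obtain ⟨y0, hy0⟩ : ∃ y0, l y0 = 1 := by
    have : ∀ t : ZMod 3, t ≠ 0 → t = 1 ∨ -t = 1 := by decide
    rcases this _ hy with h | h
    · exact ⟨y, h⟩
    · exact ⟨-y, by simpa using h⟩
  have h1 : ∑ y, RR (c + l y) = ∑ y, RR (c + l y + 1) := by
    rw [← Equiv.sum_comp (Equiv.addRight y0)]
    refine Finset.sum_congr rfl fun x _ => ?_
    simp [hy0, add_assoc]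
  have h2 : ∑ y, RR (c + l y) = ∑ y, RR (c + l y + 2) := by
    rw [← Equiv.sum_comp (Equiv.addRight (y0 + y0))]
    refine Finset.sum_congr rfl fun x _ => ?_
    have : (1 + 1 : ZMod 3) = 2 := by decide
    simp [hy0, add_assoc, this]
  have h3 : ∑ y, (RR (c + l y) + RR (c + l y + 1) + RR (c + l y + 2)) = 0 :=
    Finset.sum_eq_zero fun x _ => RR_add_three _
  rw [Finset.sum_add_distrib, Finset.sum_add_distrib, ← h1, ← h2] at h3
  omega

/-- descent -/
lemma descent (n : ℕ) : ∀ X Y : ℤ, X ^ 2 + 3 * Y ^ 2 = 3 ^ n →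
    (Even n → Y = 0 ∧ (X = 3 ^ (n / 2) ∨ X = - 3 ^ (n / 2))) ∧ (Odd n → X = 0) := by
  induction n with
  | zero =>
    intro X Y hXY
    have hY : Y = 0 := by
      by_contra hne
      have : 0 < Y ^ 2 := by positivity
      nlinarith [sq_nonneg X]
    subst hY
    have : X ^ 2 = 1 := by simpa using hXY
    refine ⟨fun _ => ⟨rfl, by simpa using (sq_eq_sq_iff_eq_or_eq_neg.mp (by simpa using this) : X = 1 ∨ X = -1)⟩, fun h => by simp at h⟩
  | succ n ih =>
    intro X Y hXY
    have h3 : (3 : ℤ) ∣ X := by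
      have : (3 : ℤ) ∣ X ^ 2 := ⟨3 ^ n - Y ^ 2, by rw [pow_succ 3] at hXY; linarith⟩
      exact Int.prime_three.dvd_of_dvd_pow this
    obtain ⟨Z, rfl⟩ := h3
    have := ih Y Z (by rw [pow_succ 3] at hXY; nlinarith)
    constructor
    · intro he
      have ho : Odd n := by
        rcases Nat.even_or_odd n with h | h
        · exact absurd he (by simpa [Nat.even_add_one] using h)
        · exact h
      have hY := this.2 ho
      refine ⟨hY, ?_⟩
      subst hY
      obtain ⟨k, rfl⟩ := ho
      have e1 : (2 * k + 1 + 1) / 2 = k + 1 := by omega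
      rw [e1]
      have : (3 * Z) ^ 2 = (3 ^ (k+1)) ^ 2 := by
        rw [← pow_mul]
        rw [show (k + 1) * 2 = 2 * k + 1 + 1 by ring, ← hXY]; ring
      exact sq_eq_sq_iff_eq_or_eq_neg.mp this
    · intro ho
      have he : Even n := by
        rcases Nat.even_or_odd n with h | h
        · exact h
        · exact absurd ho (by simpa [Nat.odd_add_one] using h)
      rw [(this.1 he).1]; ring

lemma quad_sum {V : Type*} [AddCommGroup V] [Fintype V] (Q : V → ZMod 3) (B : V → V →+ ZMod 3)
    (hB : ∀ y z, Q (z + y) - Q y = Q z + B z y) (hK : ∀ z, (∀ y, B z y = 0) → Q z = 0)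
    (K : Finset V) (hKm : ∀ z, z ∈ K ↔ ∀ y, B z y = 0) :
    (∑ y, RR (Q y)) ^ 2 + 3 * (∑ y, II (Q y)) ^ 2 = 4 * Fintype.card V * K.card := by
  classical
  have e1 : (∑ y, RR (Q y)) ^ 2 + 3 * (∑ y, II (Q y)) ^ 2
      = ∑ y, ∑ z, 2 * RR (Q z - Q y) := by
    rw [sq, sq, Finset.sum_mul_sum, Finset.sum_mul_sum, Finset.mul_sum, ← Finset.sum_add_distrib]
    refine Finset.sum_congr rfl fun y _ => ?_
    rw [Finset.mul_sum, ← Finset.sum_add_distrib]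
    refine Finset.sum_congr rfl fun z _ => ?_
    rw [RR_II, ← RR_neg, neg_sub]
  have e2 : ∀ y, ∑ z, 2 * RR (Q z - Q y) = ∑ z, 2 * RR (Q z + B z y) := by
    intro y
    rw [← Equiv.sum_comp (Equiv.addRight y)]
    refine Finset.sum_congr rfl fun z _ => ?_
    simp [hB]
  rw [e1, Finset.sum_congr rfl fun y _ => e2 y, Finset.sum_comm]
  have e3 : ∀ z, ∑ y, 2 * RR (Q z + B z y) = if z ∈ K then 4 * (Fintype.card V : ℤ) else 0 := by
    intro z
    split_ifs with hz
    · rw [hKm] at hz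
      simp [hz, hK z hz, RR]; ring
    · rw [hKm] at hz
      push Not at hz
      rw [← Finset.mul_sum, sum_RR_hom _ _ hz, mul_zero]
  rw [Finset.sum_congr rfl fun z _ => e3 z]
  simp; ring

lemma three_eq_zero (F : Type*) [Field F] [Algebra (ZMod 3) F] : (3 : F) = 0 := by
  have : algebraMap (ZMod 3) F 3 = 0 := by
    rw [show (3 : ZMod 3) = 0 by decide, map_zero]
  rwa [map_ofNat] at this

lemma trace_nondeg {F : Type*} [Field F] [Finite F] [Algebra (ZMod 3) F] {a : F} (ha : a ≠ 0) :
    ∃ b : F, Algebra.trace (ZMod 3) F (a * b) ≠ 0 := by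
  by_contra! hf
  exact ha ((traceForm_nondegenerate (ZMod 3) F).1 a hf)

lemma kernel_card {F : Type*} [Field F] [Fintype F] [Algebra (ZMod 3) F] [DecidableEq F]
    (s : F ≃ₐ[ZMod 3] F) (hfix : ∀ x, s x = x → x ^ 3 = x) (a b : F) (hab : a ≠ 0 ∨ b ≠ 0) :
    ∃ k ≤ 2, (Finset.univ.filter fun z : F =>
      a * z + 2 * s b * s z + s a * s (s z) = 0).card = 3 ^ k := by
  have h3 : (3 : F) = 0 := three_eq_zero F
  have h2 : (2 : F) ≠ 0 := by
    intro h
    have : (1 : F) = 3 - 2 := by norm_num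
    rw [h, h3] at this; simp at this
  have hfix' : ∀ x, s x = x → x = 0 ∨ x = 1 ∨ x = -1 := by
    intro x hx
    have := hfix x hx
    have : x * ((x - 1) * (x + 1)) = 0 := by linear_combination this
    rcases mul_eq_zero.mp this with h | h
    · exact Or.inl h
    rcases mul_eq_zero.mp h with h | h
    · exact Or.inr (Or.inl (by linear_combination h))
    · exact Or.inr (Or.inr (by linear_combination h))
  set K := Finset.univ.filter fun z : F =>
      a * z + 2 * s b * s z + s a * s (s z) = 0 with hKdef
  have hmem : ∀ z, z ∈ K ↔ a * z + 2 * s b * s z + s a * s (s z) = 0 := by simp [hKdef]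
  have hpow : ∃ k, K.card = 3 ^ k := by
    let S : AddSubgroup F :=
      { carrier := {z | a * z + 2 * s b * s z + s a * s (s z) = 0}
        zero_mem' := by simp
        add_mem' := by
          intro x y hx hy
          simp only [Set.mem_ofPred_eq, map_add] at *
          linear_combination hx + hy
        neg_mem' := by
          intro x hx
          simp only [Set.mem_ofPred_eq, map_neg] at *
          linear_combination -hx }
    let S' : Submodule (ZMod 3) F := AddSubgroup.toZModSubmodule 3 S
    have hc : Nat.card S' = 3 ^ Module.finrank (ZMod 3) S' := by
      rw [Module.natCard_eq_pow_finrank (K := ZMod 3)]; simp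
    refine ⟨_, Eq.trans ?_ hc⟩
    exact (Nat.subtype_card K hmem).symm
  have hle : K.card ≤ 9 := by
    by_cases hex : ∃ z ∈ K, z ≠ 0
    swap
    · push Not at hex
      have : K ⊆ {0} := fun z hz => by simpa using hex z hz
      have := Finset.card_le_card this
      simp at this; omega
    obtain ⟨z1, hz1, hz0⟩ := hex
    have hs0 : ∀ x, x ≠ 0 → s x ≠ 0 := fun x hx h => hx (by simpa using h)
    have ha : a ≠ 0 := by
      rintro rfl
      have hb : b ≠ 0 := by simpa using hab
      rw [hmem] at hz1
      have := hs0 _ hz0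
      have := hs0 _ hb
      simp_all
    have hsa := hs0 _ ha
    have hsz1 := hs0 _ hz0
    have hrat : ∀ x y, y ≠ 0 → s x * y = x * s y → x = 0 ∨ x = y ∨ x = -y := by
      intro x y hy hxy
      have hsy := hs0 _ hy
      have : s (x / y) = x / y := by
        rw [map_div₀]; field_simp; linear_combination hxy
      rcases hfix' _ this with h | h | h
      · left; simpa [hy] using h
      · right; left; field_simp at h; exact h
      · right; right; field_simp at h; exact h
    let W : F → F := fun z => z1 * s z - z * s z1
    have hW : ∀ z ∈ K, s a * s (W z) = a * W z := by
      intro z hz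
      rw [hmem] at hz hz1
      simp only [W, map_sub, map_mul]
      linear_combination s z1 * hz - s z * hz1
    have himg : (K.image W).card ≤ 3 := by
      by_cases hW0 : ∃ w ∈ K.image W, w ≠ 0
      · obtain ⟨w, hw, hw0⟩ := hW0
        have : K.image W ⊆ {0, w, -w} := by
          intro u hu
          obtain ⟨z, hz, rfl⟩ := Finset.mem_image.mp hw
          obtain ⟨z', hz', rfl⟩ := Finset.mem_image.mp hu
          have h1 := hW z hz
          have h2 := hW z' hz'
          have : s (W z') * W z = W z' * s (W z) := by
            apply mul_left_cancel₀ hsa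
            linear_combination W z * h2 - W z' * h1
          have := hrat _ _ hw0 this
          simpa using this
        exact (Finset.card_le_card this).trans Finset.card_le_three
      · push Not at hW0
        have : K.image W ⊆ {0} := fun z hz => by simpa using hW0 z hz
        have := Finset.card_le_card this
        simp at this; omega
    have := Finset.card_le_mul_card_image (f := W) K 3 (by
      intro w hw
      obtain ⟨z, hz, rfl⟩ := Finset.mem_image.mp hw
      have : K.filter (fun x => W x = W z) ⊆ {z, z + z1, z - z1} := by
        intro x hx
        have hx := (Finset.mem_filter.mp hx).2
        simp only [W] at hx
        have := hrat (x - z) z1 hz0 (by rw [map_sub]; linear_combination hx)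
        simp only [Finset.mem_insert, Finset.mem_singleton]
        rcases this with h | h | h
        · left; linear_combination h
        · right; left; linear_combination h
        · right; right; linear_combination h
      exact (Finset.card_le_card this).trans Finset.card_le_three)
    omega
  obtain ⟨k, hk⟩ := hpow
  refine ⟨k, ?_, hk⟩
  by_contra hlt
  have : 3 ^ 3 ≤ 3 ^ k := Nat.pow_le_pow_right (by norm_num) (by omega)
  omega

lemma sum_even {F : Type*} [Field F] [Fintype F] [Algebra (ZMod 3) F] (g : F → ℤ)
    (h0 : g 0 = 0) (hg : ∀ y, g (-y) = g y) : Even (∑ y, g y) := by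
  rw [even_iff_two_dvd]
  have := (ZMod.intCast_zmod_eq_zero_iff_dvd (∑ y, g y) 2).mp
  apply this
  push_cast
  refine Finset.sum_involution (fun y _ => -y) ?_ ?_ ?_ ?_
  · intro y _
    rw [hg]; exact CharTwo.add_self_eq_zero _
  · intro y _ hy h
    apply hy
    have h3 := three_eq_zero F
    have : y = 0 := by linear_combination y * h3 + h
    rw [this, h0]; rfl
  · simp
  · simp

open Algebra in
/-- the exponential-sum value for the quadratic form -/
lemma quad_values {F : Type*} [Field F] [Fintype F] [Algebra (ZMod 3) F] {j : ℕ}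
    (hF : Fintype.card F = 3 ^ (2 * j + 1))
    (s : F ≃ₐ[ZMod 3] F) (hfix : ∀ x, s x = x → x ^ 3 = x) (a b : F) (hab : a ≠ 0 ∨ b ≠ 0)
    (T : ℤ) (hT : T = ∑ y : F, RR (trace (ZMod 3) F (a * (s y * y) + b * y ^ 2))) :
    T = 0 ∨ T = 2 * 3 ^ (j + 1) ∨ T = - (2 * 3 ^ (j + 1)) := by
  classical
  have htr : ∀ x, trace (ZMod 3) F (s x) = trace (ZMod 3) F x := fun x =>
    Algebra.trace_eq_of_algEquiv s x
  let Q : F → ZMod 3 := fun y => trace (ZMod 3) F (a * (s y * y) + b * y ^ 2)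
  let B : F → F →+ ZMod 3 := fun z =>
    { toFun := fun y => trace (ZMod 3) F (s y * (a * z + 2 * s b * s z + s a * s (s z)))
      map_zero' := by simp
      map_add' := by intro x y; rw [map_add, add_mul, map_add] }
  obtain ⟨k, hk2, hk⟩ := kernel_card s hfix a b hab
  set K := Finset.univ.filter fun z : F =>
      a * z + 2 * s b * s z + s a * s (s z) = 0 with hKdef
  have hB : ∀ y z, Q (z + y) - Q y = Q z + B z y := by
    intro y z
    have h1 : B z y = trace (ZMod 3) F (a * (s y * z) + 2 * (b * (y * z)) + a * (s z * y)) := by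
      have e2 := htr (2 * (b * (y * z)))
      have e3 := htr (a * (s z * y))
      simp only [B, AddMonoidHom.coe_mk, ZeroHom.coe_mk]
      rw [map_add, map_add, ← e2, ← e3, ← map_add, ← map_add]
      congr 1
      simp only [map_mul, map_ofNat]
      ring
    rw [h1]
    simp only [Q]
    rw [← map_sub, ← map_add]
    congr 1
    simp only [map_add]
    ring
  have hQneg : ∀ y, Q (-y) = Q y := by intro y; simp [Q]
  have hKm : ∀ z, z ∈ K ↔ ∀ y, B z y = 0 := by
    intro z
    rw [hKdef, Finset.mem_filter]
    simp only [Finset.mem_univ, true_and, B, AddMonoidHom.coe_mk, ZeroHom.coe_mk]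
    constructor
    · intro h y; rw [h]; simp
    · intro h
      by_contra hne
      obtain ⟨w, hw⟩ := trace_nondeg hne
      apply hw
      have := h (s.symm w)
      rw [AlgEquiv.apply_symm_apply, mul_comm] at this
      convert this
  have hK : ∀ z, (∀ y, B z y = 0) → Q z = 0 := by
    intro z hz
    have := hB (-z) z
    have h0 : Q 0 = 0 := by simp [Q]
    rw [hz, hQneg, add_neg_cancel, h0] at this
    revert this
    generalize Q z = t
    revert t; decide
  have key := quad_sum Q B hB hK K hKm
  have hJ : Even (∑ y, II (Q y)) := sum_even _ (by simp [Q, II]) (by intro y; rw [hQneg])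
  have hTT : T = ∑ y, RR (Q y) := hT
  rw [← hTT, hF, hk] at key
  obtain ⟨Y, hY⟩ := hJ
  rw [hY] at key
  push_cast at key
  have hTe : Even T := by
    have : Even (T ^ 2) := ⟨2 * 3 ^ (2 * j + 1) * 3 ^ k - 6 * Y ^ 2, by linear_combination key⟩
    exact (Int.even_pow.mp this).1
  obtain ⟨X, hX⟩ := hTe
  subst hX
  have key2 : X ^ 2 + 3 * Y ^ 2 = 3 ^ (2 * j + 1 + k) := by
    rw [pow_add]
    have : 4 * (X ^ 2 + 3 * Y ^ 2) = 4 * (3 ^ (2 * j + 1) * 3 ^ k) := by linear_combination key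
    linarith
  have D := descent _ X Y key2
  interval_cases k
  · left; rw [D.2 ⟨j, by ring⟩]; rfl
  · right
    have := (D.1 ⟨j + 1, by ring⟩).2
    rw [show (2 * j + 1 + 1) / 2 = j + 1 by omega] at this
    rcases this with h | h
    · left; rw [h]; ring
    · right; rw [h]; ring
  · left; rw [D.2 ⟨j + 1, by ring⟩]; rfl

open Algebra in
/-- the change of variables -/
lemma subst_sum {F : Type*} [Field F] [Fintype F] [Algebra (ZMod 3) F] {N v t : ℕ}
    (hF : Fintype.card F = 2 * N + 1) (hN : Odd N) (hv : Odd v)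
    (hvt : ∀ y : F, y ^ (t * v) = y ^ 2) (ht0 : t ≠ 0) (a b : F) :
    ∑ x : F, RR (trace (ZMod 3) F (a * x) + trace (ZMod 3) F (b * x ^ v)) =
      ∑ y : F, RR (trace (ZMod 3) F (a * y ^ t + b * y ^ 2)) := by
  have hη : ∀ y : F, y ≠ 0 → y ^ N = 1 ∨ y ^ N = -1 := by
    intro y hy
    have := FiniteField.pow_card_sub_one_eq_one y hy
    rw [hF, Nat.add_sub_cancel, mul_comm, pow_mul] at this
    exact sq_eq_sq_iff_eq_or_eq_neg.mp (by simpa using this)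
  have hN0 : N ≠ 0 := by rintro rfl; simp at hN
  have hv0 : v ≠ 0 := by rintro rfl; simp at hv
  let f : F → F := fun y => y ^ N * y ^ t
  have hfv : ∀ y, (f y) ^ v = y ^ N * y ^ 2 := by
    intro y
    by_cases hy : y = 0
    · simp [f, hy, hN0, hv0]
    simp only [f]
    rw [mul_pow, ← pow_mul y t, hvt]
    rcases hη y hy with h | h <;> simp [h, hv.neg_one_pow]
  have hinj : Function.Injective f := by
    intro y z hyz
    by_cases hy : y = 0
    · subst hy
      have : z ^ N * z ^ t = 0 := by rw [← show f z = z ^ N * z ^ t from rfl, ← hyz]; simp [f, hN0]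
      rw [← pow_add] at this
      exact (pow_eq_zero_iff (by omega) |>.mp this).symm
    by_cases hz : z = 0
    · subst hz
      have : y ^ N * y ^ t = 0 := by rw [← show f y = y ^ N * y ^ t from rfl, hyz]; simp [f, hN0]
      rw [← pow_add] at this
      exact (pow_eq_zero_iff (by omega) |>.mp this)
    have h1 : y ^ N * y ^ 2 = z ^ N * z ^ 2 := by rw [← hfv, ← hfv, hyz]
    have hNN : ∀ x : F, x ≠ 0 → (x ^ N * x ^ 2) ^ N = x ^ N := by
      intro x hx
      rw [mul_pow, ← pow_mul x 2, mul_comm 2 N, pow_mul x N 2]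
      rcases hη x hx with h | h <;> simp [h, hN.neg_one_pow]
    have h2 : y ^ N = z ^ N := by rw [← hNN y hy, ← hNN z hz, h1]
    rw [h2] at h1
    have h3 : y ^ 2 = z ^ 2 := mul_left_cancel₀ (pow_ne_zero _ hz) h1
    rcases sq_eq_sq_iff_eq_or_eq_neg.mp h3 with h | h
    · exact h
    · exfalso
      rw [h, hN.neg_pow] at h2
      have h3 := three_eq_zero F
      have : z ^ N = 0 := by linear_combination z ^ N * h3 + h2
      exact pow_ne_zero _ hz this
  have hbij : Function.Bijective f := Finite.injective_iff_bijective.mp hinj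
  rw [← hbij.sum_comp]
  refine Finset.sum_congr rfl fun y _ => ?_
  rw [hfv, ← map_add]
  by_cases hy : y = 0
  · simp [f, hy, hN0, ht0]
  rcases hη y hy with h | h
  · simp [f, h]
  · simp only [f, h]
    rw [← RR_neg, ← map_neg]
    congr 2; ring

open Algebra in
/-- linear functional sum -/
lemma moment_aux {F : Type*} [Field F] [Fintype F] [DecidableEq F] [Algebra (ZMod 3) F] (x y : F) :
    ∑ ab : F × F, RR (trace (ZMod 3) F (ab.1 * x) + trace (ZMod 3) F (ab.2 * y)) =
      if x = 0 ∧ y = 0 then 2 * (Fintype.card F : ℤ) ^ 2 else 0 := by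
  split_ifs with h
  · simp [h.1, h.2, RR]; ring
  · let l : F × F →+ ZMod 3 :=
      { toFun := fun ab => trace (ZMod 3) F (ab.1 * x) + trace (ZMod 3) F (ab.2 * y)
        map_zero' := by simp
        map_add' := by intro u w; simp only [Prod.fst_add, Prod.snd_add, add_mul, map_add]; ring }
    have := sum_RR_hom l 0 (by
      by_cases hx : x = 0
      · have hy : y ≠ 0 := fun hy => h ⟨hx, hy⟩
        obtain ⟨w, hw⟩ := trace_nondeg hy
        exact ⟨(0, w), by simpa [l, mul_comm] using hw⟩
      · obtain ⟨w, hw⟩ := trace_nondeg hx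
        exact ⟨(w, 0), by simpa [l, mul_comm] using hw⟩)
    simpa [l] using this

open Algebra in
lemma moments {F : Type*} [Field F] [Fintype F] [Algebra (ZMod 3) F] {v : ℕ} (hv : Odd v)
    (T : F × F → ℤ)
    (hT : ∀ ab, T ab = ∑ x : F, RR (trace (ZMod 3) F (ab.1 * x) + trace (ZMod 3) F (ab.2 * x ^ v))) :
    ∑ ab, T ab = 2 * (Fintype.card F : ℤ) ^ 2 ∧ ∑ ab, T ab ^ 2 = 4 * (Fintype.card F : ℤ) ^ 3 := by
  classical
  have hv0 : v ≠ 0 := by rintro rfl; simp at hv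
  constructor
  · simp only [hT]
    rw [Finset.sum_comm]
    simp only [moment_aux]
    have : ∀ x : F, (x = 0 ∧ x ^ v = 0) ↔ x = 0 := by intro x; simp [hv0]
    simp only [this]
    simp
  · have e : ∀ ab : F × F, T ab ^ 2 = ∑ x : F, ∑ y : F,
      (RR (trace (ZMod 3) F (ab.1 * (x + y)) + trace (ZMod 3) F (ab.2 * (x ^ v + y ^ v))) +
       RR (trace (ZMod 3) F (ab.1 * (x - y)) + trace (ZMod 3) F (ab.2 * (x ^ v - y ^ v)))) := by
      intro ab
      rw [hT, sq, Finset.sum_mul_sum]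
      refine Finset.sum_congr rfl fun x _ => Finset.sum_congr rfl fun y _ => ?_
      rw [RR_mul]
      congr 2
      · simp only [mul_add, map_add]; ring
      · simp only [mul_sub, map_sub]; ring
    rw [Finset.sum_congr rfl fun ab _ => e ab, Finset.sum_comm]
    have e2 : ∀ x : F, ∑ ab : F × F, ∑ y : F,
      (RR (trace (ZMod 3) F (ab.1 * (x + y)) + trace (ZMod 3) F (ab.2 * (x ^ v + y ^ v))) +
       RR (trace (ZMod 3) F (ab.1 * (x - y)) + trace (ZMod 3) F (ab.2 * (x ^ v - y ^ v))))
       = 4 * (Fintype.card F : ℤ) ^ 2 := by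
      intro x
      rw [Finset.sum_comm]
      simp only [Finset.sum_add_distrib, moment_aux]
      have h1 : ∀ y : F, (x + y = 0 ∧ x ^ v + y ^ v = 0) ↔ y = -x := by
        intro y
        constructor
        · rintro ⟨h, _⟩; linear_combination h
        · rintro rfl; simp [hv.neg_pow]
      have h2 : ∀ y : F, (x - y = 0 ∧ x ^ v - y ^ v = 0) ↔ y = x := by
        intro y
        constructor
        · rintro ⟨h, _⟩; linear_combination -h
        · rintro rfl; simp
      simp only [h1, h2]
      simp; ring
    rw [Finset.sum_congr rfl fun x _ => e2 x]
    simp; ring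

lemma final_count {V : Type*} [Fintype V] [Zero V] (p : ℕ) (hp : 3 ≤ p) (W : V → ℕ) (T : V → ℤ)
    (hwt : ∀ x, T x = 2 * (3 * (p : ℤ) ^ 2) - 3 * (W x : ℤ))
    (hval : ∀ x, x ≠ 0 → T x = 0 ∨ T x = 2 * (3 * (p : ℤ)) ∨ T x = - (2 * (3 * (p : ℤ))))
    (hT0 : T 0 = 2 * (3 * (p : ℤ) ^ 2))
    (hM1 : ∑ x, T x = 2 * (3 * (p : ℤ) ^ 2) ^ 2) (hM2 : ∑ x, T x ^ 2 = 4 * (3 * (p : ℤ) ^ 2) ^ 3)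
    (hV : Fintype.card V = (3 * p ^ 2) ^ 2) (w : ℕ) :
    {x | W x = w}.ncard =
        if w = 0 then 1
        else if w = 2 * (p ^ 2 - p) then
          (3 * p ^ 2 - 1) * (p ^ 2 + p) / 2
        else if w = 2 * p ^ 2 then
          (3 * p ^ 2 - 1) * (3 * p ^ 2 - p ^ 2 + 1)
        else if w = 2 * (p ^ 2 + p) then
          (3 * p ^ 2 - 1) * (p ^ 2 - p) / 2
        else 0 := by
  classical
  obtain ⟨d, hd⟩ : ∃ d, p ^ 2 = p + d := ⟨p ^ 2 - p, by
    have : p ≤ p ^ 2 := by nlinarith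
    omega⟩
  have hdpos : 0 < d := by nlinarith
  have hdz : (p : ℤ) ^ 2 = p + d := by exact_mod_cast hd
  have hw1 : p ^ 2 - p = d := by omega
  have hW0 : W 0 = 0 := by
    have := hwt 0
    omega
  have hWv : ∀ x, x ≠ 0 → W x = 2 * p ^ 2 ∨ W x = 2 * d ∨ W x = 2 * (p ^ 2 + p) := by
    intro x hx
    have h1 := hwt x
    rw [hdz] at h1
    rw [hd]
    rcases hval x hx with h | h | h <;> omega
  let n : ℕ → ℕ := fun w => (Finset.univ.filter fun x => W x = w).card
  have hn : ∀ w, {x | W x = w}.ncard = n w := by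
    intro w
    rw [Set.ncard_eq_toFinset_card']
    congr 1
    ext x; simp
  rw [hn, hw1]
  have hn0 : n 0 = 1 := by
    simp only [n]
    rw [Finset.card_eq_one]
    refine ⟨0, ?_⟩
    ext x
    simp only [Finset.mem_filter, Finset.mem_univ, true_and, Finset.mem_singleton]
    constructor
    · intro hx
      by_contra hne
      have := hWv x hne
      omega
    · rintro rfl; exact hW0
  have hI : ∀ w, ∑ x, (if W x = w then (1 : ℤ) else 0) = n w := by
    intro w; simp [n]
  have c0 : ∑ x : V, (1 : ℤ) = n 0 + n (2 * p ^ 2) + n (2 * d) + n (2 * (p ^ 2 + p)) := by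
    rw [← hI, ← hI, ← hI, ← hI, ← Finset.sum_add_distrib, ← Finset.sum_add_distrib,
      ← Finset.sum_add_distrib]
    refine Finset.sum_congr rfl fun x _ => ?_
    by_cases hx : x = 0
    · rw [hx, hW0, if_pos rfl, if_neg (by omega), if_neg (by omega), if_neg (by omega)]; rfl
    rcases hWv x hx with h | h | h
    · rw [h, if_neg (by omega), if_pos rfl, if_neg (by omega), if_neg (by omega)]; rfl
    · rw [h, if_neg (by omega), if_neg (by omega), if_pos rfl, if_neg (by omega)]; rfl
    · rw [h, if_neg (by omega), if_neg (by omega), if_neg (by omega), if_pos rfl]; rfl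
  have c1 : ∑ x : V, T x = 6 * (p : ℤ) ^ 2 * n 0 + 6 * p * n (2 * d)
      + (- (6 * p)) * n (2 * (p ^ 2 + p)) := by
    rw [← hI, ← hI, ← hI, Finset.mul_sum, Finset.mul_sum, Finset.mul_sum,
      ← Finset.sum_add_distrib, ← Finset.sum_add_distrib]
    refine Finset.sum_congr rfl fun x _ => ?_
    by_cases hx : x = 0
    · rw [hx, hW0, if_pos rfl, if_neg (by omega), if_neg (by omega), hT0]; ring
    rcases hWv x hx with h | h | h
    · rw [hwt, h, if_neg (by omega), if_neg (by omega), if_neg (by omega)]; push_cast; ring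
    · rw [hwt, h, if_neg (by omega), if_pos rfl, if_neg (by omega)]; push_cast
      linear_combination 6 * hdz
    · rw [hwt, h, if_neg (by omega), if_neg (by omega), if_pos rfl]; push_cast; ring
  have c2 : ∑ x : V, T x ^ 2 = 36 * (p : ℤ) ^ 4 * n 0 + 36 * p ^ 2 * n (2 * d)
      + (36 * p ^ 2) * n (2 * (p ^ 2 + p)) := by
    rw [← hI, ← hI, ← hI, Finset.mul_sum, Finset.mul_sum, Finset.mul_sum,
      ← Finset.sum_add_distrib, ← Finset.sum_add_distrib]
    refine Finset.sum_congr rfl fun x _ => ?_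
    by_cases hx : x = 0
    · rw [hx, hW0, if_pos rfl, if_neg (by omega), if_neg (by omega), hT0]; ring
    rcases hWv x hx with h | h | h
    · rw [hwt, h, if_neg (by omega), if_neg (by omega), if_neg (by omega)]; push_cast; ring
    · rw [hwt, h, if_neg (by omega), if_pos rfl, if_neg (by omega)]
      have : (2 * (3 * (p : ℤ) ^ 2) - 3 * ((2 * d : ℕ) : ℤ)) = 6 * p := by
        push_cast; linear_combination 6 * hdz
      rw [this]; ring
    · rw [hwt, h, if_neg (by omega), if_neg (by omega), if_pos rfl]; push_cast; ring
  rw [hn0] at c0 c1 c2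
  rw [hM1] at c1
  rw [hM2] at c2
  have hp0 : (p : ℤ) ≠ 0 := by positivity
  have d1 : (n (2 * d) : ℤ) - n (2 * (p ^ 2 + p)) = (3 * p ^ 2 - 1) * p := by
    have : (6 * (p : ℤ)) ≠ 0 := by positivity
    apply mul_left_cancel₀ this
    push_cast at c1
    linear_combination -c1
  have d2 : (n (2 * d) : ℤ) + n (2 * (p ^ 2 + p)) = (3 * p ^ 2 - 1) * p ^ 2 := by
    have : (36 * (p : ℤ) ^ 2) ≠ 0 := by positivity
    apply mul_left_cancel₀ this
    push_cast at c2
    linear_combination -c2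
  have d0 : (n (2 * p ^ 2) : ℤ) = (3 * p ^ 2 - 1) * (2 * p ^ 2 + 1) := by
    simp [hV] at c0
    linear_combination -c0 - d2
  have hq1 : 1 ≤ 3 * p ^ 2 := by nlinarith
  have e1 : (3 * p ^ 2 - 1) * (p ^ 2 + p) = 2 * n (2 * d) := by
    zify [hq1]; linear_combination - d1 - d2
  have e3 : (3 * p ^ 2 - 1) * d = 2 * n (2 * (p ^ 2 + p)) := by
    zify [hq1]; linear_combination d1 - d2 - (3 * (p : ℤ) ^ 2 - 1) * hdz
  have e2 : (3 * p ^ 2 - 1) * (3 * p ^ 2 - p ^ 2 + 1) = n (2 * p ^ 2) := by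
    rw [show 3 * p ^ 2 - p ^ 2 = 2 * p ^ 2 by omega]
    zify [hq1]; linear_combination - d0
  rw [e1, e2, e3]
  split_ifs with h0 h1 h2 h3
  · rw [h0, hn0]
  · rw [h1]; omega
  · rw [h2]
  · rw [h3]; omega
  · simp only [n]
    rw [Finset.card_eq_zero, Finset.filter_eq_empty_iff]
    intro x _ hx
    by_cases hx0 : x = 0
    · rw [hx0, hW0] at hx; omega
    rcases hWv x hx0 with h | h | h <;> omega



/-- weight distribution (Table II) of the ternary cyclic code
`C_{(1,v,3,m)}` with `m ≥ 3` odd, `h ∣ m+1` with `(m+1)/h` even, and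
`v = (3^{m+1}-1)/(3^h+1) + (3^m-1)/2`; codewords are
`c(a,b)_i = Tr(a α^i) + Tr(b α^{iv})`. -/
theorem stmt16 {m : ℕ} (hm : Odd m) (hm3 : 3 ≤ m)
    {h : ℕ} (hh : 0 < h) (hdvd : h ∣ m + 1) (heven : Even ((m + 1) / h))
    {F : Type*} [Field F] [Fintype F] [Algebra (ZMod 3) F]
    (hF : Fintype.card F = 3 ^ m)
    (α : Fˣ) (hα : ∀ x : Fˣ, x ∈ Subgroup.zpowers α)
    (v : ℕ) (hv : v = (3 ^ (m + 1) - 1) / (3 ^ h + 1) + (3 ^ m - 1) / 2)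
    (c : F × F → Fin (3 ^ m - 1) → ZMod 3)
    (hc : c = fun (ab : F × F) (i : Fin (3 ^ m - 1)) =>
      Algebra.trace (ZMod 3) F (ab.1 * (α : F) ^ (i : ℕ)) +
        Algebra.trace (ZMod 3) F (ab.2 * (α : F) ^ ((i : ℕ) * v))) :
    ∀ w : ℕ,
      {ab : F × F | hammingNorm (c ab) = w}.ncard =
        if w = 0 then 1
        else if w = 2 * (3 ^ (m - 1) - 3 ^ ((m - 1) / 2)) then
          (3 ^ m - 1) * (3 ^ (m - 1) + 3 ^ ((m - 1) / 2)) / 2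
        else if w = 2 * 3 ^ (m - 1) then
          (3 ^ m - 1) * (3 ^ m - 3 ^ (m - 1) + 1)
        else if w = 2 * (3 ^ (m - 1) + 3 ^ ((m - 1) / 2)) then
          (3 ^ m - 1) * (3 ^ (m - 1) - 3 ^ ((m - 1) / 2)) / 2
        else 0 := by
  classical
  obtain ⟨j, rfl⟩ := hm
  have hj : 1 ≤ j := by omega
  -- arithmetic of v
  obtain ⟨N, hN, hNodd⟩ : ∃ N, 3 ^ (2 * j + 1) = 2 * N + 1 ∧ Odd N := by
    have : 3 ^ (2 * j + 1) % 4 = 3 := by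
      rw [pow_succ, pow_mul, Nat.mul_mod, Nat.pow_mod]; norm_num
    generalize 3 ^ (2 * j + 1) = Z at this
    refine ⟨(Z - 1) / 2, by omega, ?_⟩
    rw [Nat.odd_iff]; omega
  obtain ⟨e, he⟩ := hdvd
  rw [he, Nat.mul_div_cancel_left _ hh] at heven
  obtain ⟨r, hr⟩ := heven
  obtain ⟨u, hu⟩ : ∃ u, 3 ^ (2 * j + 1 + 1) - 1 = (3 ^ h + 1) * (2 * u) := by
    have h1 : 3 ^ (2 * h) - 1 ∣ 3 ^ (2 * j + 1 + 1) - 1 := by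
      rw [he, hr, show h * (r + r) = (2 * h) * r by ring]
      exact Nat.pow_sub_one_dvd_pow_sub_one 3 (Dvd.intro _ rfl)
    have h2 : 3 ^ (2 * h) - 1 = (3 ^ h + 1) * (3 ^ h - 1) := by
      rw [mul_comm 2 h, pow_mul]
      simpa using Nat.sq_sub_sq (3 ^ h) 1
    obtain ⟨w, hw⟩ := h1
    have hodd : 3 ^ h % 2 = 1 := by rw [Nat.pow_mod]; norm_num
    refine ⟨(3 ^ h - 1) / 2 * w, ?_⟩
    rw [hw, h2, mul_assoc]
    congr 1
    rw [← mul_assoc]; congr 1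
    omega
  have hv' : v = 2 * u + N := by
    rw [hv, hu, Nat.mul_div_cancel_left _ (by positivity), hN]
    congr 1; omega
  have hvodd : Odd v := by
    rw [hv', Nat.odd_iff]; rw [Nat.odd_iff] at hNodd; omega
  have hcard1 : ∀ y : F, y ≠ 0 → y ^ (2 * N) = 1 := by
    intro y hy
    have := FiniteField.pow_card_sub_one_eq_one y hy
    rwa [hF, hN, Nat.add_sub_cancel] at this
  have hvt : ∀ y : F, y ^ ((3 ^ h + 1) * v) = y ^ 2 := by
    intro y
    have hv0 : v ≠ 0 := by rintro rfl; simp at hvodd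
    by_cases hy : y = 0
    · rw [hy, zero_pow (by positivity), zero_pow (by norm_num)]
    have hodd : 3 ^ h % 2 = 1 := by rw [Nat.pow_mod]; norm_num
    obtain ⟨g, hg⟩ : ∃ g, 3 ^ h + 1 = 2 * g := ⟨(3 ^ h + 1) / 2, by omega⟩
    have e1 : (3 ^ h + 1) * v = 2 + 2 * N * (3 + g) := by
      have : (3 ^ h + 1) * (2 * u) = 2 + 2 * N * 3 := by
        rw [← hu, pow_succ, hN]; omega
      rw [hv', mul_add, this, hg]; ring
    rw [e1, pow_add, pow_mul, hcard1 y hy, one_pow, mul_one]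
  -- the Frobenius power
  let s : F ≃ₐ[ZMod 3] F := (FiniteField.frobeniusAlgEquivOfAlgebraic (ZMod 3) F) ^ h
  have hs : ∀ x, s x = x ^ (3 ^ h) := by
    intro x
    simp only [s]
    rw [AlgEquiv.coe_pow, FiniteField.coe_frobeniusAlgEquivOfAlgebraic_iterate, ZMod.card]
  have hfix : ∀ x, s x = x → x ^ 3 = x := by
    intro x hx
    rw [hs] at hx
    have h1 : ∀ n, x ^ (3 ^ (h * n)) = x := by
      intro n
      induction n with
      | zero => simp
      | succ n ih => rw [mul_add, pow_add, pow_mul, ih, mul_one, hx]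
    have h2 := h1 e
    have h3 := FiniteField.pow_card x
    rwa [← he, pow_succ, pow_mul, ← hF, h3] at h2
  -- weights
  let T : F × F → ℤ := fun ab => ∑ x : F, RR (Algebra.trace (ZMod 3) F (ab.1 * x) +
    Algebra.trace (ZMod 3) F (ab.2 * x ^ v))
  obtain ⟨hM1, hM2⟩ := moments hvodd T (fun ab => rfl)
  have hTval : ∀ ab, ab ≠ 0 → T ab = 0 ∨ T ab = 2 * 3 ^ (j + 1) ∨ T ab = - (2 * 3 ^ (j + 1)) := by
    intro ab hab
    refine quad_values hF s hfix ab.1 ab.2 ?_ _ ?_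
    · by_contra! hne
      exact hab (Prod.ext hne.1 hne.2)
    · simp only [T]
      rw [subst_sum (hF.trans hN) hNodd hvodd hvt (by positivity)]
      refine Finset.sum_congr rfl fun y _ => ?_
      rw [hs, pow_succ]
  have hwt : ∀ ab, T ab = 2 * 3 ^ (2 * j + 1) - 3 * (hammingNorm (c ab) : ℤ) := by
    intro ab
    let f : F → ZMod 3 := fun x => Algebra.trace (ZMod 3) F (ab.1 * x) +
      Algebra.trace (ZMod 3) F (ab.2 * x ^ v)
    have h1 : (hammingNorm (c ab)) = (Finset.univ.filter fun x : F => f x ≠ 0).card := by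
      have ho : orderOf α = 3 ^ (2 * j + 1) - 1 := by
        rw [orderOf_eq_card_of_forall_mem_zpowers hα, Nat.card_units, Nat.card_eq_fintype_card, hF]
      have hf0 : f 0 = 0 := by
        have : v ≠ 0 := by rintro rfl; simp at hvodd
        simp [f, this]
      unfold hammingNorm
      refine Finset.card_bij (fun i _ => ((α : F) ^ (i : ℕ))) ?_ ?_ ?_
      · intro i hi
        simpa [hc, f, ← pow_mul] using hi
      · intro i _ i' _ hii
        have : α ^ (i : ℕ) = α ^ (i' : ℕ) := by ext; simpa using hii
        exact Fin.ext (pow_injOn_Iio_orderOf (by simp [ho]) (by simp [ho]) this)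
      · intro x hx
        have hfx : f x ≠ 0 := by simpa using hx
        have hx0 : x ≠ 0 := by rintro rfl; exact hfx hf0
        obtain ⟨n, hn⟩ := (mem_powers_iff_mem_zpowers.mpr (hα (Units.mk0 x hx0)))
        have hpos : 0 < orderOf α := orderOf_pos α
        have hn' : (α : F) ^ (n % orderOf α) = x := by
          have := congrArg (Units.val) ((pow_mod_orderOf α n).trans hn)
          rwa [Units.val_pow_eq_pow_val] at this
        refine ⟨⟨n % orderOf α, by rw [← ho]; exact Nat.mod_lt _ hpos⟩, ?_, hn'⟩
        simp only [Finset.mem_filter, Finset.mem_univ, true_and, hc]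
        rw [pow_mul, hn']
        exact hfx
    have h2 : ∀ t, RR t = 2 - 3 * (if t ≠ 0 then 1 else 0) := by decide
    rw [h1]
    change ∑ x, RR (f x) = _
    simp only [h2, Finset.sum_sub_distrib, ← Finset.mul_sum]
    rw [Finset.sum_boole]
    simp [hF]; ring
  -- counting
  have hp2 : (3 : ℕ) ^ (2 * j) = (3 ^ j) ^ 2 := by rw [← pow_mul, mul_comm]
  have hq : (3 : ℕ) ^ (2 * j + 1) = 3 * (3 ^ j) ^ 2 := by rw [pow_succ, hp2]; ring
  have hp3 : 3 ≤ 3 ^ j := by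
    calc 3 = 3 ^ 1 := by norm_num
      _ ≤ 3 ^ j := Nat.pow_le_pow_right (by norm_num) hj
  rw [show 2 * j + 1 - 1 = 2 * j by omega, show 2 * j / 2 = j by omega, hp2]
  have hqz : (3 : ℤ) ^ (2 * j + 1) = 3 * (3 ^ j) ^ 2 := by exact_mod_cast hq
  have hFz : (Fintype.card F : ℤ) = 3 * (3 ^ j) ^ 2 := by rw [hF]; exact_mod_cast hq
  have hPz : (3 : ℤ) ^ (j + 1) = 3 * 3 ^ j := by rw [pow_succ]; ring
  rw [hFz] at hM1 hM2
  simp only [hqz] at hwt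
  simp only [hPz] at hTval
  have hcF : Fintype.card (F × F) = (3 * (3 ^ j) ^ 2) ^ 2 := by
    rw [Fintype.card_prod, hF, hq]; ring
  have hT0 : T 0 = 2 * (3 * (3 ^ j) ^ 2) := by
    simp [T, RR, ← hFz, mul_comm]
  have FC := final_count (3 ^ j) hp3 (fun ab => hammingNorm (c ab)) T (by push_cast; exact hwt)
    (by push_cast; exact hTval) (by push_cast; exact hT0) (by push_cast; exact hM1)
    (by push_cast; exact hM2) hcF
  rw [← hq] at FC
  exact FC
end

section
/- Let m ≡ 7 (mod 8), q = 3^m, and v = (3^{(m+1)/8}−1)(3^{(m+1)/4}+1)(3^{(m+1)/2}+1) + (3^m−1)/2. Then the number of pairs (a,b) ∈ GF(q)² such that wt(c(a,b)) = w equals: 1 if w = 0; (1/2)(3^m−1)(3^{m−1}+3^{(m−1)/2}) if w = 2(3^{m−1}−3^{(m−1)/2}); (3^m−1)(3^m−3^{m−1}+1) if w = 2·3^{m−1}; (1/2)(3^m−1)(3^{m−1}−3^{(m−1)/2}) if w = 2(3^{m−1}+3^{(m−1)/2}); and 0 for every other value of w. -/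
namespace Tern
open Finset

def e (t : ZMod 3) : ℤ := if t = 0 then 2 else -1
def d (t : ZMod 3) : ℤ := if t = 0 then 0 else if t = 1 then 1 else -1

lemma e_mul (s t : ZMod 3) : e s * e t = e (s + t) + e (s - t) := by
  revert s t; decide
lemma e_sub (s t : ZMod 3) : 2 * e (s - t) = e s * e t + 3 * (d s * d t) := by
  revert s t; decide
lemma e_three (s : ZMod 3) : e s + e (s + 1) + e (s + 2) = 0 := by
  revert s; decide
lemma e_neg (s : ZMod 3) : e (-s) = e s := by
  revert s; decide

/-- descent -/
lemma descent (n : ℕ) : ∀ S t : ℤ, S ^ 2 + 3 * t ^ 2 = 3 ^ n →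
    (n % 2 = 1 ∧ S = 0) ∨ (n % 2 = 0 ∧ (S = 3 ^ (n / 2) ∨ S = - 3 ^ (n / 2))) := by
  induction n using Nat.strong_induction_on with
  | _ n ih =>
    intro S t h
    rcases n with _ | _ | n
    · right
      simp only [pow_zero] at h
      have ht : t = 0 := by
        by_contra ht
        have := sq_nonneg S
        have : 0 < t ^ 2 := by positivity
        omega
      subst ht
      have : S ^ 2 = 1 := by linarith
      simpa using this
    · left
      refine ⟨rfl, ?_⟩
      have h3 : (3 : ℤ) ∣ S := by
        apply Int.prime_three.dvd_of_dvd_pow (n := 2)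
        refine ⟨1 - t ^ 2, ?_⟩
        simp at h; linarith
      obtain ⟨r, rfl⟩ := h3
      simp at h
      by_contra hr
      have hr' : r ≠ 0 := by rintro rfl; simp at hr
      have : 0 < r ^ 2 := by positivity
      nlinarith [sq_nonneg t]
    · have h3 : (3 : ℤ) ∣ S := by
        apply Int.prime_three.dvd_of_dvd_pow (n := 2)
        refine ⟨3 ^ (n + 1) - t ^ 2, ?_⟩
        have := pow_succ (3 : ℤ) (n + 1); linarith
      obtain ⟨r, rfl⟩ := h3
      have h3 : (3 : ℤ) ∣ t := by
        apply Int.prime_three.dvd_of_dvd_pow (n := 2)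
        refine ⟨3 ^ n - r ^ 2, ?_⟩
        have := pow_succ (3 : ℤ) (n + 1); have := pow_succ (3 : ℤ) n; linarith
      obtain ⟨u, rfl⟩ := h3
      have h' : r ^ 2 + 3 * u ^ 2 = 3 ^ n := by
        have := pow_succ (3 : ℤ) (n + 1); have := pow_succ (3 : ℤ) n; linarith
      have e1 : (n + 1 + 1) / 2 = n / 2 + 1 := by omega
      rcases ih n (by omega) r u h' with ⟨h1, rfl⟩ | ⟨h1, h2⟩
      · left; constructor
        · omega
        · simp
      · right
        refine ⟨by omega, ?_⟩
        rw [e1, pow_succ]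
        rcases h2 with rfl | rfl
        · left; ring
        · right; ring

section
variable {F : Type*} [Field F] [Fintype F] [Algebra (ZMod 3) F]

local notation "Tr" => Algebra.trace (ZMod 3) F

lemma charP3 (F : Type*) [Field F] [Algebra (ZMod 3) F] : CharP F 3 :=
  charP_of_injective_algebraMap (algebraMap (ZMod 3) F).injective 3

lemma tr_surj : ∃ x : F, Tr x = 1 := Algebra.trace_surjective (ZMod 3) F 1

lemma tr_pow (k : ℕ) (x : F) : Tr (x ^ 3 ^ k) = Tr x := by
  induction k generalizing x with
  | zero => simp
  | succ k ih =>
    have := charP3 F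
    have : ExpChar F 3 := ExpChar.prime Nat.prime_three
    rw [pow_succ, pow_mul]
    have := Algebra.trace_eq_of_algEquiv (FiniteField.frobeniusAlgEquiv (ZMod 3) F 3) (x ^ 3 ^ k)
    rw [← ih x, ← this]
    simp [FiniteField.frobeniusAlgEquiv]

lemma sum_e_lin (s : ZMod 3) (c : F) (hc : c ≠ 0) : ∑ y : F, e (s + Tr (y * c)) = 0 := by
  obtain ⟨x, hx⟩ := tr_surj (F := F)
  have h1 : ∑ y : F, e (s + Tr (y * c)) = ∑ y : F, e (s + Tr (y * c) + 1) := by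
    rw [← Equiv.sum_comp (Equiv.addRight (x / c))]
    refine sum_congr rfl fun y _ => ?_
    simp [add_mul, hc, hx, add_assoc]
  have h2 : ∑ y : F, e (s + Tr (y * c)) = ∑ y : F, e (s + Tr (y * c) + 2) := by
    rw [← Equiv.sum_comp (Equiv.addRight ((x + x) / c))]
    refine sum_congr rfl fun y _ => ?_
    have : (2 : ZMod 3) = 1 + 1 := by decide
    simp [add_mul, hc, hx, add_assoc, this]
  have h3 : ∑ y : F, e (s + Tr (y * c)) + ∑ y : F, e (s + Tr (y * c) + 1)
      + ∑ y : F, e (s + Tr (y * c) + 2) = 0 := by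
    rw [← sum_add_distrib, ← sum_add_distrib]
    exact sum_eq_zero fun y _ => e_three _
  linarith

lemma fix_field {m k : ℕ} (hm : m + 1 = 8 * k) (hF : Fintype.card F = 3 ^ m) (x : F)
    (hx : x ^ 3 ^ k = x) : x = 0 ∨ x = 1 ∨ x = -1 := by
  have hj : ∀ j : ℕ, x ^ 3 ^ (k * j) = x := by
    intro j
    induction j with
    | zero => simp
    | succ j ih => rw [mul_add, mul_one, pow_add, pow_mul, ih, hx]
  have h8 := hj 8
  rw [mul_comm, ← hm, pow_succ, pow_mul, ← hF, FiniteField.pow_card] at h8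
  have : x * ((x - 1) * (x + 1)) = 0 := by linear_combination h8
  rcases mul_eq_zero.mp this with h | h
  · exact Or.inl h
  rcases mul_eq_zero.mp h with h | h
  · exact Or.inr (Or.inl (by linear_combination h))
  · exact Or.inr (Or.inr (by linear_combination h))

/-- the linearized polynomial -/
def M (k : ℕ) (a b z : F) : F := a ^ 3 ^ k * (z ^ 3 ^ k) ^ 3 ^ k + 2 * b ^ 3 ^ k * z ^ 3 ^ k + a * z

lemma M_add (k : ℕ) (a b x y : F) : M k a b (x + y) = M k a b x + M k a b y := by
  have := charP3 F
  unfold M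
  rw [add_pow_char_pow, add_pow_char_pow]; ring

/-- the kernel as an additive subgroup -/
def K (k : ℕ) (a b : F) : AddSubgroup F := (AddMonoidHom.mk' (M k a b) (M_add k a b)).ker

lemma mem_K (k : ℕ) (a b z : F) : z ∈ K k a b ↔ M k a b z = 0 := Iff.rfl

lemma card_K_le {m k : ℕ} (hm : m + 1 = 8 * k) (hF : Fintype.card F = 3 ^ m) (a b : F)
    (hab : (a, b) ≠ 0) : Nat.card (K k a b) ≤ 9 := by
  classical
  have := charP3 F
  have h2 : (2 : F) ≠ 0 := by
    intro h
    have h3 : (3 : F) = 0 := by exact_mod_cast CharP.cast_eq_zero F 3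
    have : (1 : F) = 0 := by linear_combination h3 - h
    exact one_ne_zero this
  have hk0 : 3 ^ k ≠ 0 := by positivity
  let s : Finset F := univ.filter (fun z => M k a b z = 0)
  have hs : Nat.card (K k a b) = s.card := by
    rw [← Nat.card_eq_finsetCard]
    exact Nat.card_congr (Equiv.subtypeEquivRight fun z => by simp [s, mem_K])
  rw [hs]
  by_cases ha : a = 0
  · subst ha
    have hb : b ≠ 0 := by rintro rfl; exact hab rfl
    have : s ⊆ {0} := by
      intro z hz
      simp [s, M, hb, h2] at hz
      simp [hz]
    exact (card_le_card this).trans (by simp)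
  by_cases hz1 : ∃ z1 ∈ s, z1 ≠ 0
  swap
  · push Not at hz1
    have : s ⊆ {0} := fun z hz => by simp [hz1 z hz]
    exact (card_le_card this).trans (by simp)
  obtain ⟨z1, hz1s, hz1⟩ := hz1
  let f : F → F := fun z => z1 * z ^ 3 ^ k - z * z1 ^ 3 ^ k
  have hf : ∀ z ∈ s, a ^ 3 ^ k * (f z) ^ 3 ^ k = a * f z := by
    intro z hz
    have hz := (mem_filter.mp hz).2
    have hz1s := (mem_filter.mp hz1s).2
    unfold M at hz hz1s
    simp only [f]
    rw [sub_pow_char_pow, mul_pow, mul_pow]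
    linear_combination z1 ^ 3 ^ k * hz - z ^ 3 ^ k * hz1s
  have hfib : ∀ w ∈ s.image f, (s.filter (fun z => f z = w)).card ≤ 3 := by
    intro w hw
    obtain ⟨z0, hz0, rfl⟩ := mem_image.mp hw
    have : s.filter (fun z => f z = f z0) ⊆ {z0, z0 + z1, z0 - z1} := by
      intro z hz
      have hz := (mem_filter.mp hz).2
      have h : ((z - z0) / z1) ^ 3 ^ k = (z - z0) / z1 := by
        rw [div_pow, sub_pow_char_pow]
        simp only [f] at hz
        rw [div_eq_div_iff (pow_ne_zero _ hz1) hz1]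
        linear_combination hz
      have := fix_field hm hF _ h
      simp only [mem_insert, mem_singleton]
      rcases this with h | h | h <;> rw [div_eq_iff hz1] at h
      · left; linear_combination h
      · right; left; linear_combination h
      · right; right; linear_combination h
    exact (card_le_card this).trans card_le_three
  have himg : (s.image f).card ≤ 3 := by
    by_cases h0 : ∃ w0 ∈ s.image f, w0 ≠ 0
    swap
    · push Not at h0
      have : s.image f ⊆ {0} := fun z hz => by simp [h0 z hz]
      exact (card_le_card this).trans (by simp)
    obtain ⟨w0, hw0, hw00⟩ := h0
    have : s.image f ⊆ {0, w0, -w0} := by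
      intro w hw
      obtain ⟨z, hz, rfl⟩ := mem_image.mp hw
      obtain ⟨z0, hz0, rfl⟩ := mem_image.mp hw0
      have e1 := hf z hz
      have e2 := hf z0 hz0
      have h : (f z / f z0) ^ 3 ^ k = f z / f z0 := by
        rw [div_pow, div_eq_div_iff (pow_ne_zero _ hw00) hw00]
        have : a ^ 3 ^ k ≠ 0 := pow_ne_zero _ ha
        apply mul_left_cancel₀ this
        linear_combination f z0 * e1 - f z * e2
      simp only [mem_insert, mem_singleton]
      rcases fix_field hm hF _ h with h | h | h <;> rw [div_eq_iff hw00] at h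
      · left; linear_combination h
      · right; left; linear_combination h
      · right; right; linear_combination h
    exact (card_le_card this).trans card_le_three
  have := card_le_mul_card_image s 3 hfib
  omega

lemma card_K {m k : ℕ} (hm : m + 1 = 8 * k) (hF : Fintype.card F = 3 ^ m) (a b : F)
    (hab : (a, b) ≠ 0) : ∃ j ≤ 2, Nat.card (K k a b) = 3 ^ j := by
  have h1 := card_K_le hm hF a b hab
  have h2 : Nat.card (K k a b) ∣ 3 ^ m := by
    rw [← hF, ← Nat.card_eq_fintype_card]
    exact AddSubgroup.card_addSubgroup_dvd_card _
  obtain ⟨j, _, hj⟩ := (Nat.dvd_prime_pow Nat.prime_three).mp h2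
  refine ⟨j, ?_, hj⟩
  rw [hj] at h1
  exact (Nat.pow_le_pow_iff_right (by norm_num : 1 < 3)).mp (h1.trans (by norm_num : 9 ≤ 3 ^ 2))

/-- the quadratic form -/
noncomputable def Q (k : ℕ) (a b y : F) : ZMod 3 := Tr (a * y ^ (3 ^ k + 1) + b * y ^ 2)

lemma Q_add (k : ℕ) (a b y z : F) :
    Q k a b (y + z) = Q k a b y + Q k a b z + Tr (y ^ 3 ^ k * M k a b z) := by
  have := charP3 F
  have h1 : Tr ((a * z ^ 3 ^ k + (b * z + b * z)) * y)
      = Tr (y ^ 3 ^ k * (a ^ 3 ^ k * (z ^ 3 ^ k) ^ 3 ^ k + 2 * b ^ 3 ^ k * z ^ 3 ^ k)) := by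
    rw [← tr_pow k]
    congr 1
    rw [mul_pow, add_pow_char_pow, add_pow_char_pow, mul_pow, mul_pow]
    ring
  have h2 : y ^ 3 ^ k * M k a b z =
      y ^ 3 ^ k * (a ^ 3 ^ k * (z ^ 3 ^ k) ^ 3 ^ k + 2 * b ^ 3 ^ k * z ^ 3 ^ k)
        + y ^ 3 ^ k * (a * z) := by
    unfold M; ring
  rw [h2, map_add, ← h1]
  unfold Q
  rw [← map_add, ← map_add, ← map_add]
  congr 1
  rw [pow_succ, pow_succ, pow_succ, add_pow_char_pow]
  ring

lemma Q_ker (k : ℕ) (a b z : F) (hz : M k a b z = 0) : Q k a b z = 0 := by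
  have h := Q_add k a b z z
  have h3 : Q k a b (z + z) = 4 * Q k a b z := by
    have := charP3 F
    have h3 : (3 : F) = 0 := by exact_mod_cast CharP.cast_eq_zero F 3
    have : z + z = -z := by linear_combination z * h3
    rw [this]
    have h4 : (4 : ZMod 3) = 1 := by decide
    rw [h4, one_mul]
    unfold Q
    congr 2
    · congr 1
      apply Even.neg_pow
      exact (Odd.pow (by decide)).add_odd odd_one
    · ring
  rw [hz, h3] at h
  simp only [mul_zero, map_zero, add_zero] at h
  have key : ∀ t : ZMod 3, 4 * t = t + t → t = 0 := by decide
  exact key _ h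

lemma pow_bij (k : ℕ) : Function.Bijective (fun y : F => y ^ 3 ^ k) := by
  have := charP3 F
  apply Finite.injective_iff_bijective.mp
  intro x y h
  simp only at h
  have : (x - y) ^ 3 ^ k = 0 := by rw [sub_pow_char_pow, h, sub_self]
  exact sub_eq_zero.mp (pow_eq_zero_iff (by positivity) |>.mp this)

lemma sum_sq (k : ℕ) (a b : F) : ∑ y : F, ∑ x : F, e (Q k a b x - Q k a b y)
    = 2 * Fintype.card F * Nat.card (K k a b) := by
  classical
  have h1 : ∀ y : F, ∑ x : F, e (Q k a b x - Q k a b y)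
      = ∑ z : F, e (Q k a b z + Tr (y ^ 3 ^ k * M k a b z)) := by
    intro y
    rw [← Equiv.sum_comp (Equiv.addLeft y)]
    refine sum_congr rfl fun z _ => ?_
    simp only [Equiv.coe_addLeft]
    rw [Q_add]
    congr 1; ring
  have h2 : ∀ z : F, ∑ y : F, e (Q k a b z + Tr (y ^ 3 ^ k * M k a b z))
      = if M k a b z = 0 then 2 * (Fintype.card F : ℤ) else 0 := by
    intro z
    split_ifs with hz
    · rw [hz, Q_ker k a b z hz]
      simp [e, mul_comm]
    · rw [← sum_e_lin (Q k a b z) _ hz]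
      exact (pow_bij k).sum_comp (fun y => e (Q k a b z + Tr (y * M k a b z)))
  rw [sum_congr rfl fun y _ => h1 y, sum_comm, sum_congr rfl fun z _ => h2 z]
  rw [← sum_filter, sum_const, nsmul_eq_mul]
  have : Nat.card (K k a b) = (univ.filter (fun z => M k a b z = 0)).card := by
    rw [← Nat.card_eq_finsetCard]
    exact Nat.card_congr (Equiv.subtypeEquivRight fun z => by simp [mem_K])
  rw [this]; ring

lemma even_sum (f : F → ℤ) (h0 : (2 : ℤ) ∣ f 0) (hf : ∀ x, f (-x) = f x) : (2 : ℤ) ∣ ∑ x, f x := by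
  have := charP3 F
  have h3 : (3 : F) = 0 := by exact_mod_cast CharP.cast_eq_zero F 3
  apply (ZMod.intCast_zmod_eq_zero_iff_dvd _ 2).mp
  push_cast
  refine sum_involution (fun x _ => -x) ?_ ?_ ?_ ?_
  · intro x _
    rw [hf]
    exact CharTwo.add_self_eq_zero _
  · intro x _ h h'
    apply h
    have hx : x = 0 := by linear_combination x * h3 + h'
    rw [hx]
    exact (ZMod.intCast_zmod_eq_zero_iff_dvd _ 2).mpr h0
  · simp
  · simp

lemma Q_neg (k : ℕ) (a b z : F) : Q k a b (-z) = Q k a b z := by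
  unfold Q
  congr 2
  · congr 1
    apply Even.neg_pow
    exact (Odd.pow (by decide)).add_odd odd_one
  · ring

lemma Q_zero (k : ℕ) (a b : F) : Q k a b 0 = 0 := by simp [Q]

lemma quad_sum {m k : ℕ} (hm : m + 1 = 8 * k) (hF : Fintype.card F = 3 ^ m) (a b : F)
    (hab : (a, b) ≠ 0) :
    ∑ y : F, e (Q k a b y) = 0 ∨ ∑ y : F, e (Q k a b y) = 2 * 3 ^ (4 * k) ∨
      ∑ y : F, e (Q k a b y) = - (2 * 3 ^ (4 * k)) := by
  have h1 := sum_sq k a b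
  have h2 : 2 * ∑ y : F, ∑ x : F, e (Q k a b x - Q k a b y)
      = (∑ y, e (Q k a b y)) ^ 2 + 3 * (∑ y, d (Q k a b y)) ^ 2 := by
    rw [mul_sum, sq, sq, sum_mul_sum, sum_mul_sum, mul_sum, ← sum_add_distrib]
    refine sum_congr rfl fun y _ => ?_
    rw [mul_sum, mul_sum, ← sum_add_distrib]
    refine sum_congr rfl fun x _ => ?_
    rw [e_sub]; ring
  obtain ⟨j, hj, hK⟩ := card_K hm hF a b hab
  obtain ⟨S, hS⟩ := even_sum (fun y => e (Q k a b y)) (by simp [Q_zero, e])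
    (fun x => by simp only [Q_neg])
  obtain ⟨t, ht⟩ := even_sum (fun y => d (Q k a b y)) (by simp [Q_zero, d])
    (fun x => by simp only [Q_neg])
  rw [h1, hK, hF, hS, ht] at h2
  have h3 : S ^ 2 + 3 * t ^ 2 = 3 ^ (m + j) := by
    push_cast at h2
    rw [pow_add]; linarith
  rw [hS]
  rcases descent _ S t h3 with ⟨_, h⟩ | ⟨hp, h⟩
  · left; rw [h]; rfl
  · right
    have : (m + j) / 2 = 4 * k := by omega
    rw [this] at h
    rcases h with h | h
    · left; rw [h]
    · right; rw [h]; ring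

lemma num {m k v : ℕ} (hk : 1 ≤ k) (hm : m + 1 = 8 * k)
    (hv : v = (3 ^ k - 1) * (3 ^ (2 * k) + 1) * (3 ^ (4 * k) + 1) + (3 ^ m - 1) / 2) :
    ∃ p N, 3 ^ m = 2 * p + 1 ∧ Odd p ∧ Odd v ∧ v * (3 ^ k + 1) = 2 + N * (2 * p) ∧ 1 ≤ p := by
  have h4 : 3 ^ m % 4 = 3 := by
    obtain ⟨j, rfl⟩ : ∃ j, m = 2 * j + 1 := ⟨4 * k - 1, by omega⟩
    rw [pow_succ, pow_mul, Nat.mul_mod, Nat.pow_mod]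
    norm_num
  obtain ⟨x, hx⟩ : ∃ x, 3 ^ k = 2 * x + 1 := (Odd.pow (by decide) : Odd (3 ^ k))
  obtain ⟨p, hp⟩ : ∃ p, 3 ^ m = 2 * p + 1 := ⟨3 ^ m / 2, by omega⟩
  have hpo : Odd p := by rw [Nat.odd_iff]; omega
  have hp2 : (3 ^ m - 1) / 2 = p := by omega
  rw [hp2] at hv
  have h8 : (3 ^ k) ^ 8 = 3 * (2 * p + 1) := by
    rw [← pow_mul, mul_comm k 8, ← hm, pow_succ, hp]; ring
  have e2 : 3 ^ (2 * k) = (3 ^ k) ^ 2 := by rw [← pow_mul, mul_comm]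
  have e4 : 3 ^ (4 * k) = (3 ^ k) ^ 4 := by rw [← pow_mul, mul_comm]
  rw [e2, e4, hx, Nat.add_sub_cancel] at hv
  rw [hx] at h8
  refine ⟨p, 3 + (x + 1), hp, hpo, ?_, ?_, hpo.pos⟩
  · rw [hv]
    apply Even.add_odd _ hpo
    exact ⟨x * ((2 * x + 1) ^ 2 + 1) * ((2 * x + 1) ^ 4 + 1), by ring⟩
  · rw [hv, hx]
    zify at h8 ⊢
    linear_combination h8

/-- the exponential sum -/
noncomputable def E (v : ℕ) (a b : F) : ℤ := ∑ x : F, e (Tr (a * x + b * x ^ v))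

lemma E_eq {m k v : ℕ} (hk : 1 ≤ k) (hm : m + 1 = 8 * k) (hF : Fintype.card F = 3 ^ m)
    (hv : v = (3 ^ k - 1) * (3 ^ (2 * k) + 1) * (3 ^ (4 * k) + 1) + (3 ^ m - 1) / 2) (a b : F) :
    E v a b = ∑ y : F, e (Q k a b y) := by
  obtain ⟨p, N, hp, hpo, hvo, hvN, hp1⟩ := num hk hm hv
  have h3k : 0 < 3 ^ k := by positivity
  have hone : ∀ y : F, y ≠ 0 → y ^ (2 * p) = 1 := by
    intro y hy
    have := FiniteField.pow_card_sub_one_eq_one y hy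
    rwa [hF, hp, Nat.add_sub_cancel] at this
  have hdo : Even (3 ^ k + 1) := (Odd.pow (by decide)).add_odd odd_one
  have hno : Odd (3 ^ k + 1 + p) := hdo.add_odd hpo
  have hn0 : 3 ^ k + 1 + p ≠ 0 := by positivity
  have hbij : Function.Bijective (fun y : F => y ^ (3 ^ k + 1 + p)) := by
    apply Finite.injective_iff_bijective.mp
    intro y z h
    simp only at h
    by_cases hz : z = 0
    · subst hz
      rw [zero_pow hn0] at h
      exact pow_eq_zero_iff hn0 |>.mp h
    have hy : y ≠ 0 := by
      rintro rfl
      rw [zero_pow hn0] at h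
      exact hz (pow_eq_zero_iff hn0 |>.mp h.symm)
    have hw : y / z ≠ 0 := div_ne_zero hy hz
    have h1 : (y / z) ^ (3 ^ k + 1 + p) = 1 := by
      rw [div_pow, h, div_self (pow_ne_zero _ hz)]
    have h2 := hone _ hw
    have h4 : (y / z) ^ 4 = 1 := by
      have : (y / z) ^ ((3 ^ k + 1 + p) * (2 * v)) = 1 := by rw [pow_mul, h1, one_pow]
      have e1 : (3 ^ k + 1 + p) * (2 * v) = 4 + (2 * p) * (2 * N + v) := by
        zify at hvN ⊢
        linear_combination 2 * hvN
      rwa [e1, pow_add, pow_mul (y / z) (2 * p), h2, one_pow, mul_one] at this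
    obtain ⟨r, hr⟩ := hpo
    have hsq : (y / z) ^ 2 = 1 := by
      have e1 : 2 * p = 4 * r + 2 := by omega
      rwa [e1, pow_add, pow_mul (y / z) 4, h4, one_pow, one_mul] at h2
    obtain ⟨s, hs⟩ := hno
    rw [hs, pow_add, pow_mul, hsq, one_pow, one_mul, pow_one, div_eq_one_iff_eq hz] at h1
    exact h1
  unfold E
  rw [← hbij.sum_comp (fun x => e (Tr (a * x + b * x ^ v)))]
  refine sum_congr rfl fun y _ => ?_
  unfold Q
  by_cases hy : y = 0
  · subst hy
    have : v ≠ 0 := by rintro rfl; exact absurd hvo (by decide)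
    rw [zero_pow hn0, zero_pow this, zero_pow (by positivity), zero_pow two_ne_zero]
  have hyv : (y ^ (3 ^ k + 1)) ^ v = y ^ 2 := by
    rw [← pow_mul, mul_comm, hvN, pow_add, mul_comm N, pow_mul y (2 * p), hone y hy, one_pow, mul_one]
  have hpm : y ^ p = 1 ∨ y ^ p = -1 := by
    have := hone y hy
    rw [mul_comm, pow_mul] at this
    simpa using this
  rw [pow_add]
  rcases hpm with h | h
  · rw [h, mul_one, hyv]
  · rw [h, mul_neg, mul_one, hvo.neg_pow, hyv, ← e_neg, ← map_neg]
    congr 2; ring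

lemma E_vals {m k v : ℕ} (hk : 1 ≤ k) (hm : m + 1 = 8 * k) (hF : Fintype.card F = 3 ^ m)
    (hv : v = (3 ^ k - 1) * (3 ^ (2 * k) + 1) * (3 ^ (4 * k) + 1) + (3 ^ m - 1) / 2) (a b : F)
    (hab : (a, b) ≠ 0) :
    E v a b = 0 ∨ E v a b = 2 * 3 ^ (4 * k) ∨ E v a b = - (2 * 3 ^ (4 * k)) := by
  rw [E_eq hk hm hF hv]
  exact quad_sum hm hF a b hab

lemma E_zero (v : ℕ) : E v (0 : F) 0 = 2 * Fintype.card F := by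
  simp [E, e, mul_comm]

open Classical in
lemma sum_ab (u w : F) : ∑ ab : F × F, e (Tr (ab.1 * u + ab.2 * w))
    = if u = 0 ∧ w = 0 then 2 * (Fintype.card F : ℤ) ^ 2 else 0 := by
  rw [Fintype.sum_prod_type]
  split_ifs with h
  · rw [h.1, h.2]
    simp [e]; ring
  · by_cases hw : w = 0
    · have hu : u ≠ 0 := fun hu => h ⟨hu, hw⟩
      rw [sum_comm]
      refine sum_eq_zero fun b _ => ?_
      rw [← sum_e_lin (Tr (b * w)) u hu]
      refine sum_congr rfl fun a _ => ?_
      rw [map_add, add_comm]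
    · refine sum_eq_zero fun a _ => ?_
      rw [← sum_e_lin (Tr (a * u)) w hw]
      refine sum_congr rfl fun b _ => ?_
      rw [map_add]

lemma moment1 (v : ℕ) (hv : Odd v) :
    ∑ ab : F × F, E v ab.1 ab.2 = 2 * (Fintype.card F : ℤ) ^ 2 := by
  classical
  unfold E
  rw [sum_comm]
  have : ∀ x : F, (x = 0 ∧ x ^ v = 0) ↔ x = 0 :=
    fun x => ⟨fun h => h.1, fun h => ⟨h, by rw [h, zero_pow hv.pos.ne']⟩⟩
  simp_rw [sum_ab, this]
  simp

lemma moment2 (v : ℕ) (hv : Odd v) :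
    ∑ ab : F × F, (E v ab.1 ab.2) ^ 2 = 4 * (Fintype.card F : ℤ) ^ 3 := by
  classical
  have h1 : ∀ ab : F × F, (E v ab.1 ab.2) ^ 2 = ∑ x : F, ∑ y : F,
      (e (Tr (ab.1 * (x + y) + ab.2 * (x ^ v + y ^ v)))
        + e (Tr (ab.1 * (x - y) + ab.2 * (x ^ v - y ^ v)))) := by
    intro ab
    unfold E
    rw [sq, sum_mul_sum]
    refine sum_congr rfl fun x _ => sum_congr rfl fun y _ => ?_
    rw [e_mul, ← map_add, ← map_sub]
    congr 3 <;> ring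
  simp_rw [h1]
  rw [sum_comm]
  have h2 : ∀ x : F, ∑ ab : F × F, ∑ y : F,
      (e (Tr (ab.1 * (x + y) + ab.2 * (x ^ v + y ^ v)))
        + e (Tr (ab.1 * (x - y) + ab.2 * (x ^ v - y ^ v)))) = 4 * (Fintype.card F : ℤ) ^ 2 := by
    intro x
    rw [sum_comm]
    simp_rw [sum_add_distrib, sum_ab]
    have h3 : ∀ y : F, (x + y = 0 ∧ x ^ v + y ^ v = 0) ↔ y = -x := by
      intro y
      constructor
      · rintro ⟨h, _⟩; linear_combination h
      · rintro rfl; rw [hv.neg_pow]; simp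
    have h4 : ∀ y : F, (x - y = 0 ∧ x ^ v - y ^ v = 0) ↔ y = x := by
      intro y
      constructor
      · rintro ⟨h, _⟩; linear_combination -h
      · rintro rfl; simp
    simp_rw [h3, h4]
    simp; ring
  simp_rw [h2]
  simp; ring

end

lemma wt_eq {m : ℕ} {F : Type*} [Field F] [Fintype F] [Algebra (ZMod 3) F]
    (hF : Fintype.card F = 3 ^ m)
    (α : Fˣ) (hα : ∀ x : Fˣ, x ∈ Subgroup.zpowers α) (v : ℕ) (hv : v ≠ 0) (a b : F) :
    3 * (hammingNorm (fun i : Fin (3 ^ m - 1) => Algebra.trace (ZMod 3) F (a * (α : F) ^ (i : ℕ)) +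
        Algebra.trace (ZMod 3) F (b * (α : F) ^ ((i : ℕ) * v))) : ℤ) = 2 * 3 ^ m - E v a b := by
  classical
  have hcard : orderOf α = 3 ^ m - 1 := by
    rw [orderOf_eq_card_of_forall_mem_zpowers hα, Nat.card_eq_fintype_card, Fintype.card_units, hF]
  let g : F → ZMod 3 := fun x => Algebra.trace (ZMod 3) F (a * x + b * x ^ v)
  have hg0 : g 0 = 0 := by simp [g, hv]
  have h1 : hammingNorm (fun i : Fin (3 ^ m - 1) => Algebra.trace (ZMod 3) F (a * (α : F) ^ (i : ℕ)) +
        Algebra.trace (ZMod 3) F (b * (α : F) ^ ((i : ℕ) * v)))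
      = (univ.filter (fun x : F => g x ≠ 0)).card := by
    unfold hammingNorm
    refine card_bij (fun i _ => (α : F) ^ (i : ℕ)) ?_ ?_ ?_
    · intro i hi
      have hi := (mem_filter.mp hi).2
      refine mem_filter.mpr ⟨mem_univ _, ?_⟩
      simp only [g]
      rwa [map_add, ← pow_mul]
    · intro i _ j _ hij
      have hij : α ^ (i : ℕ) = α ^ (j : ℕ) := by
        ext; simpa using hij
      rw [pow_inj_mod, hcard, Nat.mod_eq_of_lt i.2, Nat.mod_eq_of_lt j.2] at hij
      exact Fin.ext hij
    · intro x hx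
      have hx := (mem_filter.mp hx).2
      have hx0 : x ≠ 0 := by rintro rfl; exact hx hg0
      have hmem := mem_zpowers_iff_mem_range_orderOf.mp (hα (Units.mk0 x hx0))
      obtain ⟨n, hn, hn2⟩ := mem_image.mp hmem
      rw [mem_range, hcard] at hn
      have hn3 : (α : F) ^ n = x := by
        have := congrArg Units.val hn2
        simpa using this
      refine ⟨⟨n, hn⟩, mem_filter.mpr ⟨mem_univ _, ?_⟩, hn3⟩
      simp only [g] at hx
      change Algebra.trace (ZMod 3) F (a * (α : F) ^ n) +
        Algebra.trace (ZMod 3) F (b * (α : F) ^ (n * v)) ≠ 0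
      rwa [pow_mul, hn3, ← map_add]
  rw [h1]
  have h2 : E v a b = ∑ x : F, (2 - 3 * (if g x ≠ 0 then 1 else 0) : ℤ) := by
    unfold E
    refine sum_congr rfl fun x _ => ?_
    change e (g x) = _
    unfold e
    by_cases h : g x = 0 <;> simp [h]
  rw [h2, sum_sub_distrib, ← mul_sum, sum_boole]
  simp [hF]; ring

lemma final_count {ι : Type*} [Fintype ι] [DecidableEq ι] (z : ι) (f : ι → ℤ) (s : ℤ) (hs : 3 ≤ s)
    (hcard : (Fintype.card ι : ℤ) = 9 * s ^ 4)
    (hz : f z = 6 * s ^ 2) (hf : ∀ i, i ≠ z → f i = 0 ∨ f i = 6 * s ∨ f i = - (6 * s))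
    (h1 : ∑ i, f i = 18 * s ^ 4) (h2 : ∑ i, f i ^ 2 = 108 * s ^ 6) :
    ((univ.filter (fun i => f i = 6 * s ^ 2)).card = 1) ∧
    (2 * ((univ.filter (fun i => f i = 6 * s)).card : ℤ) = (3 * s ^ 2 - 1) * (s ^ 2 + s)) ∧
    (2 * ((univ.filter (fun i => f i = -(6 * s))).card : ℤ) = (3 * s ^ 2 - 1) * (s ^ 2 - s)) ∧
    (((univ.filter (fun i => f i = 0)).card : ℤ) = (3 * s ^ 2 - 1) * (3 * s ^ 2 - s ^ 2 + 1)) := by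
  have hss : 3 * s ≤ s ^ 2 := by nlinarith
  have h0 : univ.filter (fun i => f i = 6 * s ^ 2) = {z} := by
    ext i
    simp only [mem_filter, mem_univ, true_and, mem_singleton]
    constructor
    · intro h
      by_contra hi
      rcases hf i hi with h' | h' | h' <;> rw [h'] at h <;> linarith
    · rintro rfl; exact hz
  have key : ∀ i, f i = 6 * s ^ 2 * (if f i = 6 * s ^ 2 then 1 else 0)
      + 6 * s * (if f i = 6 * s then 1 else 0) - 6 * s * (if f i = - (6 * s) then 1 else 0)
      ∧ f i ^ 2 = 36 * s ^ 4 * (if f i = 6 * s ^ 2 then 1 else 0)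
      + 36 * s ^ 2 * (if f i = 6 * s then 1 else 0)
      + 36 * s ^ 2 * (if f i = - (6 * s) then 1 else 0)
      ∧ (1 : ℤ) = (if f i = 6 * s ^ 2 then 1 else 0) + (if f i = 6 * s then 1 else 0)
        + (if f i = - (6 * s) then 1 else 0) + (if f i = 0 then 1 else 0) := by
    intro i
    have hv : f i = 6 * s ^ 2 ∨ f i = 0 ∨ f i = 6 * s ∨ f i = - (6 * s) := by
      by_cases hi : i = z
      · left; rw [hi, hz]
      · right; exact hf i hi
    rcases hv with h | h | h | h
    · have a1 : f i ≠ 6 * s := by intro h'; linarith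
      have a2 : f i ≠ - (6 * s) := by intro h'; linarith
      have a3 : f i ≠ 0 := by intro h'; linarith
      rw [if_pos h, if_neg a1, if_neg a2, if_neg a3, h]
      refine ⟨by ring, by ring, by ring⟩
    · have a1 : f i ≠ 6 * s := by intro h'; linarith
      have a2 : f i ≠ - (6 * s) := by intro h'; linarith
      have a3 : f i ≠ 6 * s ^ 2 := by intro h'; linarith
      rw [if_pos h, if_neg a1, if_neg a2, if_neg a3, h]
      refine ⟨by ring, by ring, by ring⟩
    · have a1 : f i ≠ 6 * s ^ 2 := by intro h'; linarith
      have a2 : f i ≠ - (6 * s) := by intro h'; linarith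
      have a3 : f i ≠ 0 := by intro h'; linarith
      rw [if_pos h, if_neg a1, if_neg a2, if_neg a3, h]
      refine ⟨by ring, by ring, by ring⟩
    · have a1 : f i ≠ 6 * s := by intro h'; linarith
      have a2 : f i ≠ 6 * s ^ 2 := by intro h'; linarith
      have a3 : f i ≠ 0 := by intro h'; linarith
      rw [if_pos h, if_neg a1, if_neg a2, if_neg a3, h]
      refine ⟨by ring, by ring, by ring⟩
  have hc0 : (∑ i : ι, (1 : ℤ)) = 9 * s ^ 4 := by simpa using hcard
  rw [sum_congr rfl fun i _ => (key i).1, sum_sub_distrib, sum_add_distrib, ← mul_sum, ← mul_sum,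
    ← mul_sum, sum_boole, sum_boole, sum_boole, h0] at h1
  rw [sum_congr rfl fun i _ => (key i).2.1, sum_add_distrib, sum_add_distrib, ← mul_sum, ← mul_sum,
    ← mul_sum, sum_boole, sum_boole, sum_boole, h0] at h2
  rw [sum_congr rfl fun i _ => (key i).2.2, sum_add_distrib, sum_add_distrib, sum_add_distrib,
    sum_boole, sum_boole, sum_boole, sum_boole, h0] at hc0
  rw [h0]
  simp only [card_singleton, Nat.cast_one] at h1 h2 hc0 ⊢
  generalize ((univ.filter (fun i => f i = 6 * s)).card : ℤ) = n1 at *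
  generalize ((univ.filter (fun i => f i = -(6 * s))).card : ℤ) = n2 at *
  generalize ((univ.filter (fun i => f i = 0)).card : ℤ) = n0 at *
  have hs0 : s ≠ 0 := by omega
  have g1 : n1 - n2 = s * (3 * s ^ 2 - 1) := by
    apply mul_left_cancel₀ (mul_ne_zero (by norm_num : (6 : ℤ) ≠ 0) hs0)
    linear_combination h1
  have g2 : n1 + n2 = s ^ 2 * (3 * s ^ 2 - 1) := by
    apply mul_left_cancel₀ (mul_ne_zero (by norm_num : (36 : ℤ) ≠ 0) (pow_ne_zero 2 hs0))
    linear_combination h2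
  refine ⟨trivial, ?_, ?_, ?_⟩
  · linear_combination g1 + g2
  · linear_combination g2 - g1
  · linear_combination hc0 - g2

end Tern

/-- weight distribution (Table II) of the ternary cyclic code
`C_{(1,v,3,m)}` with `m ≡ 7 (mod 8)` and
`v = (3^{(m+1)/8}-1)(3^{(m+1)/4}+1)(3^{(m+1)/2}+1) + (3^m-1)/2`; codewords are
`c(a,b)_i = Tr(a α^i) + Tr(b α^{iv})`. -/
theorem stmt17 {m : ℕ} (hm : m % 8 = 7)
    {F : Type*} [Field F] [Fintype F] [Algebra (ZMod 3) F]
    (hF : Fintype.card F = 3 ^ m)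
    (α : Fˣ) (hα : ∀ x : Fˣ, x ∈ Subgroup.zpowers α)
    (v : ℕ)
    (hv : v = (3 ^ ((m + 1) / 8) - 1) * (3 ^ ((m + 1) / 4) + 1) * (3 ^ ((m + 1) / 2) + 1)
        + (3 ^ m - 1) / 2)
    (c : F × F → Fin (3 ^ m - 1) → ZMod 3)
    (hc : c = fun (ab : F × F) (i : Fin (3 ^ m - 1)) =>
      Algebra.trace (ZMod 3) F (ab.1 * (α : F) ^ (i : ℕ)) +
        Algebra.trace (ZMod 3) F (ab.2 * (α : F) ^ ((i : ℕ) * v))) :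
    ∀ w : ℕ,
      {ab : F × F | hammingNorm (c ab) = w}.ncard =
        if w = 0 then 1
        else if w = 2 * (3 ^ (m - 1) - 3 ^ ((m - 1) / 2)) then
          (3 ^ m - 1) * (3 ^ (m - 1) + 3 ^ ((m - 1) / 2)) / 2
        else if w = 2 * 3 ^ (m - 1) then
          (3 ^ m - 1) * (3 ^ m - 3 ^ (m - 1) + 1)
        else if w = 2 * (3 ^ (m - 1) + 3 ^ ((m - 1) / 2)) then
          (3 ^ m - 1) * (3 ^ (m - 1) - 3 ^ ((m - 1) / 2)) / 2
        else 0 := by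
  classical
  intro w
  obtain ⟨k, hk⟩ : ∃ k, m + 1 = 8 * k := ⟨(m + 1) / 8, by omega⟩
  have hk1 : 1 ≤ k := by omega
  have e8 : (m + 1) / 8 = k := by omega
  have e4 : (m + 1) / 4 = 2 * k := by omega
  have e2 : (m + 1) / 2 = 4 * k := by omega
  rw [e8, e4, e2] at hv
  obtain ⟨_, _, _, _, hvo, _, _⟩ := Tern.num hk1 hk hv
  have hwt : ∀ ab : F × F, 3 * (hammingNorm (c ab) : ℤ) = 2 * 3 ^ m - Tern.E v ab.1 ab.2 := by
    intro ab
    rw [hc]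
    exact Tern.wt_eq hF α hα v hvo.pos.ne' ab.1 ab.2
  obtain ⟨j, hj⟩ : ∃ j, m = 2 * j + 1 := ⟨4 * k - 1, by omega⟩
  have hj1 : 1 ≤ j := by omega
  have f1 : m - 1 = 2 * j := by omega
  have f2 : (m - 1) / 2 = j := by omega
  have f3 : 4 * k = j + 1 := by omega
  rw [f2, f1]
  have p2 : 3 ^ (2 * j) = (3 ^ j) ^ 2 := by rw [← pow_mul, mul_comm]
  have pm : 3 ^ m = 3 * (3 ^ j) ^ 2 := by rw [hj, pow_succ, p2, mul_comm]
  have pmz : (3 : ℤ) ^ m = 3 * (3 ^ j) ^ 2 := by exact_mod_cast pm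
  have hs3 : 3 ≤ 3 ^ j := by
    calc 3 = 3 ^ 1 := by norm_num
      _ ≤ 3 ^ j := Nat.pow_le_pow_right (by norm_num) hj1
  have hvals := fun a b => Tern.E_vals hk1 hk hF hv a b
  have m1 := Tern.moment1 (F := F) v hvo
  have m2 := Tern.moment2 (F := F) v hvo
  have hz := Tern.E_zero (F := F) v
  simp only [f3, pow_succ (3 : ℤ) j] at hvals
  rw [hF, pm] at m1 m2 hz
  rw [pmz] at hwt
  have hset : {ab : F × F | hammingNorm (c ab) = w}.ncard
      = (Finset.univ.filter (fun ab : F × F =>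
          Tern.E v ab.1 ab.2 = 6 * ((3 : ℤ) ^ j) ^ 2 - 3 * (w : ℤ))).card := by
    rw [← Set.ncard_coe_finset]
    congr 1
    ext ab
    have := hwt ab
    simp only [Set.mem_ofPred_eq, Finset.coe_filter, Finset.mem_univ, true_and]
    constructor
    · intro h; rw [h] at this; linarith
    · intro h
      have h' : (hammingNorm (c ab) : ℤ) = w := by linarith
      exact_mod_cast h'
  have hqc : (Fintype.card (F × F) : ℤ) = 9 * ((3 : ℤ) ^ j) ^ 4 := by
    rw [Fintype.card_prod, hF]; push_cast; rw [pmz]; ring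
  push_cast at m1 m2 hz
  obtain ⟨c1, c2, c3, c4⟩ := Tern.final_count (0 : F × F) (fun ab => Tern.E v ab.1 ab.2)
    ((3 : ℤ) ^ j) (by exact_mod_cast hs3) hqc
    (by simp only [Prod.fst_zero, Prod.snd_zero]; rw [hz]; ring)
    (fun ab hab => by
      have := hvals ab.1 ab.2 hab
      have e1 : 2 * ((3 : ℤ) ^ j * 3) = 6 * 3 ^ j := by ring
      rwa [e1] at this)
    (by rw [m1]; ring) (by rw [m2]; ring)
  have hall : ∀ ab : F × F, Tern.E v ab.1 ab.2 = 6 * ((3 : ℤ) ^ j) ^ 2 ∨ Tern.E v ab.1 ab.2 = 0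
      ∨ Tern.E v ab.1 ab.2 = 6 * 3 ^ j ∨ Tern.E v ab.1 ab.2 = - (6 * 3 ^ j) := by
    intro ab
    by_cases hab : ab = 0
    · left; rw [hab]; simp only [Prod.fst_zero, Prod.snd_zero]; rw [hz]; ring
    · right
      have := hvals ab.1 ab.2 hab
      have e1 : 2 * ((3 : ℤ) ^ j * 3) = 6 * 3 ^ j := by ring
      rwa [e1] at this
  rw [hset, p2, pm]
  have hcast : ((3 ^ j : ℕ) : ℤ) = (3 : ℤ) ^ j := by push_cast; rfl
  rw [← hcast] at c1 c2 c3 c4 hall ⊢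
  clear hvals m1 m2 hz hwt hset hqc pm pmz p2
  generalize 3 ^ j = s at *
  have hss : s ≤ s ^ 2 := by nlinarith
  have hs1 : 1 ≤ 3 * s ^ 2 := by nlinarith
  have hs2 : s ^ 2 ≤ 3 * s ^ 2 := by omega
  split_ifs with w0 w1 w2 w3
  · subst w0
    simpa using c1
  · have : 6 * (s : ℤ) ^ 2 - 3 * (w : ℤ) = 6 * s := by
      rw [w1]; push_cast [hss]; ring
    rw [this]
    symm
    apply Nat.div_eq_of_eq_mul_right (by norm_num)
    zify [hs1]
    exact c2.symm
  · have : 6 * (s : ℤ) ^ 2 - 3 * (w : ℤ) = 0 := by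
      rw [w2]; push_cast; ring
    rw [this]
    zify [hs1, hs2]
    exact c4
  · have : 6 * (s : ℤ) ^ 2 - 3 * (w : ℤ) = - (6 * s) := by
      rw [w3]; push_cast; ring
    rw [this]
    symm
    apply Nat.div_eq_of_eq_mul_right (by norm_num)
    zify [hs1, hss]
    exact c3.symm
  · rw [Finset.card_eq_zero, Finset.filter_eq_empty_iff]
    intro ab _ h
    rcases hall ab with h' | h' | h' | h' <;> rw [h'] at h
    · apply w0; zify; linarith only [h]
    · apply w2; zify; linarith only [h]
    · apply w1
      have h1 : (w : ℤ) = 2 * ((s : ℤ) ^ 2 - s) := by linarith only [h]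
      rw [← Nat.cast_pow, ← Nat.cast_sub hss] at h1
      exact_mod_cast h1
    · apply w3; zify; linarith only [h]
end

section
/- Let m ≡ 3 (mod 4), q = 3^m, and v = (3^{(m+1)/4}−1)(3^{(m+1)/2}+1) + (3^m−1)/2. Then the number of pairs (a,b) ∈ GF(q)² such that wt(c(a,b)) = w equals: 1 if w = 0; (1/2)(3^m−1)(3^{m−1}+3^{(m−1)/2}) if w = 2(3^{m−1}−3^{(m−1)/2}); (3^m−1)(3^m−3^{m−1}+1) if w = 2·3^{m−1}; (1/2)(3^m−1)(3^{m−1}−3^{(m−1)/2}) if w = 2(3^{m−1}+3^{(m−1)/2}); and 0 for every other value of w. -/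
namespace Stmt18

/-- twice the real part of `ω^t`. -/
def E (t : ZMod 3) : ℤ := if t = 0 then 2 else -1

/-- the imaginary part of `ω^t` up to scaling. -/
def D (t : ZMod 3) : ℤ := if t = 0 then 0 else if t = 1 then 1 else -1

lemma E_mul : ∀ s t : ZMod 3, E s * E t = E (s + t) + E (s - t) := by decide
lemma E_neg : ∀ t : ZMod 3, E (-t) = E t := by decide
lemma E_sub : ∀ s t : ZMod 3, 2 * E (s - t) = E s * E t + 3 * (D s * D t) := by decide
lemma E_sum3 : ∀ s t : ZMod 3, t ≠ 0 → E s + E (s + t) + E (s + t + t) = 0 := by decide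

lemma descent (n : ℕ) : ∀ T U : ℤ, T ^ 2 + 3 * U ^ 2 = 3 ^ n →
    (n % 2 = 0 → T ^ 2 = 3 ^ n) ∧ (n % 2 = 1 → T = 0) := by
  induction n with
  | zero =>
    intro T U h
    refine ⟨fun _ => ?_, by simp⟩
    have : U ^ 2 = 0 := by nlinarith [sq_nonneg T, sq_nonneg U]
    rw [this] at h; linarith
  | succ n ih =>
    intro T U h
    have h3 : (3 : ℤ) ∣ T := by
      apply Int.Prime.dvd_pow' (p := 3) (k := 2) Nat.prime_three
      exact ⟨3 ^ n - U ^ 2, by push_cast; linear_combination h⟩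
    obtain ⟨T', rfl⟩ := h3
    have h' : U ^ 2 + 3 * T' ^ 2 = 3 ^ n := by
      apply mul_left_cancel₀ (show (3 : ℤ) ≠ 0 by norm_num)
      linear_combination h
    obtain ⟨h0, h1⟩ := ih U T' h'
    constructor
    · intro hn
      have := h1 (by omega)
      subst this
      linarith
    · intro hn
      have := h0 (by omega)
      have : T' ^ 2 = 0 := by linarith
      simp at this
      simp [this]

section
variable {F : Type*} [Field F] [Fintype F] [Algebra (ZMod 3) F]

/-- the trace -/
noncomputable abbrev Tr (x : F) : ZMod 3 := Algebra.trace (ZMod 3) F x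

lemma charP3 : CharP F 3 := charP_of_injective_algebraMap (algebraMap (ZMod 3) F).injective 3

lemma Tr_pow (j : ℕ) (z : F) : Tr (z ^ 3 ^ j) = Tr z := by
  have h1 : ∀ z : F, Tr (z ^ 3) = Tr z := by
    intro z
    have := charP3 (F := F)
    have : Fact (Nat.Prime 3) := ⟨Nat.prime_three⟩
    have := Algebra.trace_eq_of_algEquiv (FiniteField.frobeniusAlgEquiv (ZMod 3) F 3) z
    simpa using this
  induction j with
  | zero => simp
  | succ j ih => rw [pow_succ, pow_mul, h1, ih]

lemma sum_E_lin (c : ZMod 3) (x : F) (hx : x ≠ 0) : ∑ a : F, E (c + Tr (a * x)) = 0 := by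
  obtain ⟨a0, ha0⟩ : ∃ a0 : F, Tr (x * a0) ≠ 0 := by
    have : Fact (Nat.Prime 3) := ⟨Nat.prime_three⟩
    by_contra! hcon
    exact hx ((traceForm_nondegenerate (ZMod 3) F).1 x hcon)
  have hs : ∀ c : ZMod 3, ∑ a : F, E (c + Tr (x * a0) + Tr (a * x)) = ∑ a : F, E (c + Tr (a * x)) := by
    intro c
    rw [← Equiv.sum_comp (Equiv.addRight a0) (fun a => E (c + Tr (a * x)))]
    refine Finset.sum_congr rfl fun a _ => ?_
    congr 1
    simp only [Tr, Equiv.coe_addRight, add_mul, map_add, mul_comm x a0]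
    ring
  have h1 := hs c
  have h2 := hs (c + Tr (x * a0))
  have : ∑ a : F, (E (c + Tr (a * x)) + E (c + Tr (x * a0) + Tr (a * x)) +
      E (c + Tr (x * a0) + Tr (x * a0) + Tr (a * x))) = 0 := by
    refine Finset.sum_eq_zero fun a _ => ?_
    have := E_sum3 (c + Tr (a * x)) _ ha0
    rw [add_right_comm c _ (Tr (a * x)), add_right_comm (c + Tr (x * a0)) _ (Tr (a * x)),
      add_right_comm c _ (Tr (a * x))]
    exact this
  rw [Finset.sum_add_distrib, Finset.sum_add_distrib] at this
  linarith

lemma fixed {k m : ℕ} (hm : m + 1 = 4 * k) (hF : Fintype.card F = 3 ^ m) (z : F)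
    (hz : z ^ 3 ^ k = z) : z = 0 ∨ z = 1 ∨ z = -1 := by
  have h1 : z ^ 3 ^ (4 * k) = z := by
    have : 3 ^ (4 * k) = 3 ^ k * 3 ^ k * 3 ^ k * 3 ^ k := by rw [← pow_add, ← pow_add, ← pow_add]; ring_nf
    rw [this, pow_mul, pow_mul, pow_mul, hz, hz, hz, hz]
  rw [← hm, pow_succ, pow_mul, ← hF, FiniteField.pow_card] at h1
  have : z * ((z - 1) * (z + 1)) = 0 := by linear_combination h1
  rcases mul_eq_zero.1 this with h | h
  · exact Or.inl h
  · rcases mul_eq_zero.1 h with h | h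
    · exact Or.inr (Or.inl (by linear_combination h))
    · exact Or.inr (Or.inr (by linear_combination h))

open Classical in
lemma rad_card_le {k m : ℕ} (hm : m + 1 = 4 * k) (hF : Fintype.card F = 3 ^ m) (A B C : F)
    (hA : A ≠ 0) (R : Finset F)
    (hR : ∀ h ∈ R, A * (h ^ 3 ^ k) ^ 3 ^ k + B * h ^ 3 ^ k + C * h = 0) : R.card ≤ 9 := by
  have := charP3 (F := F)
  have : Fact (Nat.Prime 3) := ⟨Nat.prime_three⟩
  by_cases hz : ∃ u ∈ R, u ≠ 0
  · obtain ⟨u, huR, hu⟩ := hz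
    have hu0 := hR u huR
    set w : F → F := fun h => (h / u) ^ 3 ^ k - h / u with hw
    have hwR : ∀ h ∈ R, A * (u ^ 3 ^ k) ^ 3 ^ k * (w h) ^ 3 ^ k = C * u * w h := by
      intro h hh
      have h0 := hR h hh
      obtain ⟨z, rfl⟩ : ∃ z, h = u * z := ⟨h / u, by field_simp⟩
      have : w (u * z) = z ^ 3 ^ k - z := by simp only [hw]; rw [mul_div_cancel_left₀ _ hu]
      rw [this, sub_pow_char_pow]
      simp only [mul_pow] at h0
      linear_combination h0 - z ^ 3 ^ k * hu0
    have himg : (R.image w).card ≤ 3 := by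
      by_cases hw0 : ∃ h ∈ R, w h ≠ 0
      · obtain ⟨h0, hh0, hne⟩ := hw0
        refine (Finset.card_le_card (t := {0, w h0, - w h0}) ?_).trans Finset.card_le_three
        intro x hx
        obtain ⟨h, hh, rfl⟩ := Finset.mem_image.1 hx
        have e1 := hwR h hh
        have e2 := hwR h0 hh0
        have hAu : A * (u ^ 3 ^ k) ^ 3 ^ k ≠ 0 := mul_ne_zero hA (pow_ne_zero _ (pow_ne_zero _ hu))
        have e3 : (w h / w h0) ^ 3 ^ k = w h / w h0 := by
          rw [div_pow, div_eq_div_iff (pow_ne_zero _ hne) hne]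
          apply mul_left_cancel₀ hAu
          linear_combination (w h0) * e1 - (w h) * e2
        have := fixed hm hF _ e3
        rw [div_eq_iff hne, div_eq_iff hne, div_eq_iff hne] at this
        simpa using this
      · push Not at hw0
        refine (Finset.card_le_card (t := {0}) ?_).trans (by simp)
        intro x hx
        obtain ⟨h, hh, rfl⟩ := Finset.mem_image.1 hx
        simp [hw0 h hh]
    have := Finset.card_le_mul_card_image (f := w) R 3 (by
      intro b hb
      obtain ⟨h0, hh0, rfl⟩ := Finset.mem_image.1 hb
      refine (Finset.card_le_card (t := {h0, h0 + u, h0 - u}) ?_).trans Finset.card_le_three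
      intro h hh
      have hh := (Finset.mem_filter.1 hh).2
      have e3 : (h / u - h0 / u) ^ 3 ^ k = h / u - h0 / u := by
        rw [sub_pow_char_pow]; simp only [hw] at hh; linear_combination hh
      have := fixed hm hF _ e3
      rw [← sub_div, div_eq_iff hu, div_eq_iff hu, div_eq_iff hu] at this
      simp only [Finset.mem_insert, Finset.mem_singleton]
      rcases this with h | h | h
      · left; linear_combination h
      · right; left; linear_combination h
      · right; right; linear_combination h)
    omega
  · push Not at hz
    refine (Finset.card_le_card (t := {0}) ?_).trans (by simp)
    intro x hx; simp [hz x hx]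

/-- the quadratic form -/
noncomputable def Q (k : ℕ) (a b y : F) : ZMod 3 := Tr (a * y ^ (3 ^ k + 1) + b * y ^ 2)

/-- the linearized map of the bilinear form of `Q` -/
noncomputable def L (k : ℕ) (a b h : F) : F :=
  (a * h) ^ 3 ^ (3 * k - 1) + a * h ^ 3 ^ k + 2 * b * h

lemma L_add (k : ℕ) (a b h g : F) : L k a b (h + g) = L k a b h + L k a b g := by
  have := charP3 (F := F)
  have : Fact (Nat.Prime 3) := ⟨Nat.prime_three⟩
  simp only [L, mul_add, add_pow_char_pow]
  ring

lemma Tr_bil {k m : ℕ} (hm : m + 1 = 4 * k) (hF : Fintype.card F = 3 ^ m) (a b z h : F) :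
    Tr (z * L k a b h) = Tr (a * (z ^ 3 ^ k * h + h ^ 3 ^ k * z) + 2 * b * z * h) := by
  have h1 : Tr (a * z ^ 3 ^ k * h) = Tr (z * (a * h) ^ 3 ^ (3 * k - 1)) := by
    rw [← Tr_pow (3 * k - 1) (a * z ^ 3 ^ k * h)]
    congr 1
    have : (z ^ 3 ^ k) ^ 3 ^ (3 * k - 1) = z := by
      rw [← pow_mul, ← pow_add, show k + (3 * k - 1) = m by omega, ← hF, FiniteField.pow_card]
    rw [show a * z ^ 3 ^ k * h = z ^ 3 ^ k * (a * h) by ring, mul_pow, this]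
  have e1 : z * L k a b h = z * (a * h) ^ 3 ^ (3 * k - 1) + (a * h ^ 3 ^ k * z + 2 * b * z * h) := by
    simp only [L]; ring
  have e2 : a * (z ^ 3 ^ k * h + h ^ 3 ^ k * z) + 2 * b * z * h =
    a * z ^ 3 ^ k * h + (a * h ^ 3 ^ k * z + 2 * b * z * h) := by ring
  rw [e1, e2]
  simp only [Tr] at h1 ⊢
  rw [map_add, map_add _ (a * z ^ 3 ^ k * h), h1]

lemma Q_add {k m : ℕ} (hm : m + 1 = 4 * k) (hF : Fintype.card F = 3 ^ m) (a b z h : F) :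
    Q k a b (z + h) - Q k a b z = Q k a b h + Tr (z * L k a b h) := by
  have := charP3 (F := F)
  have : Fact (Nat.Prime 3) := ⟨Nat.prime_three⟩
  rw [Tr_bil hm hF]
  simp only [Q, Tr]
  rw [← map_sub, ← map_add]
  congr 1
  rw [pow_succ (z + h), add_pow_char_pow]
  ring

lemma Q_rad {k m : ℕ} (hm : m + 1 = 4 * k) (hF : Fintype.card F = 3 ^ m) (a b h : F)
    (hL : L k a b h = 0) : Q k a b h = 0 := by
  have h1 := Tr_bil hm hF a b h h
  have e : a * (h ^ 3 ^ k * h + h ^ 3 ^ k * h) + 2 * b * h * h =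
    (a * h ^ (3 ^ k + 1) + b * h ^ 2) + (a * h ^ (3 ^ k + 1) + b * h ^ 2) := by ring
  rw [e, hL] at h1
  simp only [Tr, mul_zero, map_zero, map_add _ (a * h ^ (3 ^ k + 1) + b * h ^ 2)] at h1
  have h3 : ∀ t : ZMod 3, 0 = t + t → t = 0 := by decide
  exact h3 _ h1

open Classical in
lemma rad_card {k m : ℕ} (hm : m + 1 = 4 * k) (hF : Fintype.card F = 3 ^ m) (a b : F)
    (hab : a ≠ 0 ∨ b ≠ 0) :
    ∃ d ≤ 2, (Finset.univ.filter fun h : F => L k a b h = 0).card = 3 ^ d := by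
  have := charP3 (F := F)
  have : Fact (Nat.Prime 3) := ⟨Nat.prime_three⟩
  have hle : (Finset.univ.filter fun h : F => L k a b h = 0).card ≤ 9 := by
    by_cases ha : a = 0
    · have hb : b ≠ 0 := by tauto
      refine (Finset.card_le_card (t := {0}) ?_).trans (by simp)
      intro x hx
      have hx := (Finset.mem_filter.1 hx).2
      simp only [L, ha, zero_mul] at hx
      rw [zero_pow (by positivity)] at hx
      have h2 : (2 : F) ≠ 0 := by
        intro h2
        have h3 : (3 : F) = 0 := by exact_mod_cast CharP.cast_eq_zero F 3
        exact one_ne_zero (α := F) (by linear_combination h3 - h2)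
      simp [hb, h2] at hx
      simpa using hx
    · refine rad_card_le hm hF (a ^ 3 ^ k) (2 ^ 3 ^ k * b ^ 3 ^ k) a (pow_ne_zero _ ha) _ ?_
      intro h hh
      have hh := (Finset.mem_filter.1 hh).2
      simp only [L] at hh
      have := congrArg (fun x => x ^ 3 ^ k) hh
      simp only [add_pow_char_pow] at this
      rw [← pow_mul, ← pow_add, show 3 * k - 1 + k = m by omega, ← hF, FiniteField.pow_card,
        zero_pow (by positivity)] at this
      simp only [mul_pow] at this
      linear_combination this
  let f : F →+ F := AddMonoidHom.mk' (L k a b) (L_add k a b)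
  have hdvd : (Finset.univ.filter fun h : F => L k a b h = 0).card ∣ 3 ^ m := by
    have h1 := AddSubgroup.card_addSubgroup_dvd_card f.ker
    rw [Nat.card_eq_fintype_card (α := F), hF] at h1
    convert h1 using 1
    rw [Nat.card_eq_fintype_card, Fintype.card_subtype]
    congr 1
    ext x
    simp [f, AddMonoidHom.mem_ker]
  obtain ⟨d, -, hd⟩ := (Nat.dvd_prime_pow Nat.prime_three).1 hdvd
  refine ⟨d, ?_, hd⟩
  rw [hd] at hle
  by_contra hcon
  have : 3 ^ 3 ≤ 3 ^ d := Nat.pow_le_pow_right (by norm_num) (by omega)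
  omega

open Classical in
lemma quad_sum {k m : ℕ} (hm : m + 1 = 4 * k) (hF : Fintype.card F = 3 ^ m) (a b : F)
    (hab : a ≠ 0 ∨ b ≠ 0) :
    (∑ y, E (Q k a b y)) = 0 ∨ (∑ y, E (Q k a b y)) ^ 2 = 4 * 3 ^ (m + 1) := by
  have := charP3 (F := F)
  have : Fact (Nat.Prime 3) := ⟨Nat.prime_three⟩
  obtain ⟨d, hd2, hd⟩ := rad_card hm hF a b hab
  set X := ∑ y, E (Q k a b y) with hX
  set Y := ∑ y, D (Q k a b y) with hY
  have h1 : ∑ z, ∑ y, E (Q k a b y - Q k a b z) = 2 * 3 ^ (m + d) := by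
    have e1 : ∀ z, ∑ y, E (Q k a b y - Q k a b z) = ∑ h, E (Q k a b h + Tr (z * L k a b h)) := by
      intro z
      rw [← Equiv.sum_comp (Equiv.addLeft z)]
      exact Finset.sum_congr rfl fun h _ => by rw [Equiv.coe_addLeft, Q_add hm hF]
    rw [Finset.sum_congr rfl fun z _ => e1 z, Finset.sum_comm]
    have e2 : ∀ h, ∑ z, E (Q k a b h + Tr (z * L k a b h)) =
        if L k a b h = 0 then 2 * 3 ^ m else 0 := by
      intro h
      split_ifs with hL
      · simp only [Q_rad hm hF a b h hL, hL, mul_zero, Tr, map_zero, add_zero]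
        simp [hF, E]; ring
      · exact sum_E_lin _ _ hL
    rw [Finset.sum_congr rfl fun h _ => e2 h, ← Finset.sum_filter, Finset.sum_const, hd]
    simp [pow_add]; ring
  have h2 : X ^ 2 + 3 * Y ^ 2 = 4 * 3 ^ (m + d) := by
    have : 2 * ∑ z, ∑ y, E (Q k a b y - Q k a b z) = X ^ 2 + 3 * Y ^ 2 := by
      rw [sq, sq, hX, hY, Finset.sum_mul_sum, Finset.sum_mul_sum, Finset.mul_sum, Finset.mul_sum,
        ← Finset.sum_add_distrib]
      refine Finset.sum_congr rfl fun z _ => ?_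
      rw [Finset.mul_sum, Finset.mul_sum, ← Finset.sum_add_distrib]
      refine Finset.sum_congr rfl fun y _ => ?_
      rw [E_sub]; ring
    rw [← this, h1]; ring
  have hYe : (2 : ℤ) ∣ Y := by
    have hz : ((Y : ℤ) : ZMod 2) = 0 := by
      rw [hY, Int.cast_sum]
      have hneg : ∀ y : F, Q k a b (-y) = Q k a b y := by
        intro y
        simp only [Q]
        rw [Even.neg_pow (Odd.add_one (Odd.pow (by decide))), neg_sq]
      refine Finset.sum_involution (fun y _ => -y) (fun y _ => ?_) (fun y _ hy => ?_)
        (fun _ _ => Finset.mem_univ _) (fun y _ => neg_neg y)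
      · rw [hneg]; exact CharTwo.add_self_eq_zero _
      · intro hyy
        apply hy
        have h3 : (3 : F) = 0 := by exact_mod_cast CharP.cast_eq_zero F 3
        have : y = 0 := by linear_combination y * h3 + hyy
        simp [this, Q, D]
    exact (ZMod.intCast_zmod_eq_zero_iff_dvd Y 2).1 hz
  obtain ⟨U, hU⟩ := hYe
  have hXe : (2 : ℤ) ∣ X := by
    apply Int.Prime.dvd_pow' (p := 2) (k := 2) Nat.prime_two
    exact ⟨2 * 3 ^ (m + d) - 6 * U ^ 2, by push_cast; rw [hU] at h2; linear_combination h2⟩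
  obtain ⟨T, hT⟩ := hXe
  have h3 : T ^ 2 + 3 * U ^ 2 = 3 ^ (m + d) := by
    rw [hU, hT] at h2
    apply mul_left_cancel₀ (show (4 : ℤ) ≠ 0 by norm_num)
    linear_combination h2
  obtain ⟨hev, hod⟩ := descent _ _ _ h3
  by_cases hd1 : d = 1
  · right
    rw [hT, mul_pow, hev (by omega), hd1]; norm_num
  · left
    rw [hT, hod (by omega)]; norm_num

open Classical in
lemma sum_sq {m : ℕ} (hmo : m % 2 = 1) (hF : Fintype.card F = 3 ^ m) (g : F → ℤ) :
    ∑ y, g (y ^ 2) + ∑ y, g (-y ^ 2) = 2 * ∑ s, g s := by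
  have := charP3 (F := F)
  have : Fact (Nat.Prime 3) := ⟨Nat.prime_three⟩
  have hrc : ringChar F ≠ 2 := by rw [ringChar.eq F 3]; norm_num
  have h34 : 3 ^ m % 4 = 3 := by
    obtain ⟨j, rfl⟩ : ∃ j, m = 2 * j + 1 := ⟨m / 2, by omega⟩
    rw [pow_succ, pow_mul, Nat.mul_mod, Nat.pow_mod]; norm_num
  have hchi : quadraticChar F (-1) = -1 := by
    rw [quadraticChar_neg_one hrc, hF, ZMod.χ₄_nat_three_mod_four h34]
  have key : ∀ g : F → ℤ, ∑ y, g (y ^ 2) = ∑ s, (quadraticChar F s + 1) * g s := by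
    intro g
    rw [← Finset.sum_fiberwise' Finset.univ (fun y : F => y ^ 2) g]
    refine Finset.sum_congr rfl fun s _ => ?_
    rw [Finset.sum_const, ← quadraticChar_card_sqrts hrc s, nsmul_eq_mul]
    congr 3
    ext; simp
  rw [key g, key (fun s => g (-s)), ← Equiv.sum_comp (Equiv.neg F) (fun s => _ * g (- s)),
    Finset.mul_sum, ← Finset.sum_add_distrib]
  refine Finset.sum_congr rfl fun s _ => ?_
  simp only [Equiv.neg_apply, neg_neg]
  rw [← neg_one_mul s, map_mul, hchi]; ring

/-- facts about the exponent -/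
lemma v_odd {m k v : ℕ} (hm : m + 1 = 4 * k)
    (hv : v = (3 ^ k - 1) * (3 ^ (2 * k) + 1) + (3 ^ m - 1) / 2) : Odd v := by
  have h34 : 3 ^ m % 4 = 3 := by
    obtain ⟨j, rfl⟩ : ∃ j, m = 2 * j + 1 := ⟨m / 2, by omega⟩
    rw [pow_succ, pow_mul, Nat.mul_mod, Nat.pow_mod]; norm_num
  have ho : Odd (3 ^ k) := Odd.pow (by decide)
  rw [hv]
  apply Even.add_odd
  · exact Even.mul_right (Nat.Odd.sub_odd ho odd_one) _
  · rw [Nat.odd_iff]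
    clear hv
    generalize 3 ^ m = n at *
    omega

lemma v_mul {m k v : ℕ} (hm : m + 1 = 4 * k)
    (hv : v = (3 ^ k - 1) * (3 ^ (2 * k) + 1) + (3 ^ m - 1) / 2) :
    ∃ t, (3 ^ k + 1) * v + 1 = 3 ^ m * 3 + (3 ^ m - 1) * t := by
  have ho : Odd (3 ^ k) := Odd.pow (by decide)
  have ho' : Odd (3 ^ m) := Odd.pow (by decide)
  obtain ⟨s, hs⟩ := ho
  obtain ⟨r, hr⟩ := ho'
  refine ⟨s + 1, ?_⟩
  have h1 : 3 ^ m * 3 = (3 ^ k) ^ 4 := by rw [← pow_succ, hm, ← pow_mul]; ring_nf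
  rw [h1, hv, mul_comm 2 k, pow_mul, hr, hs]
  simp only [Nat.add_sub_cancel, Nat.mul_div_cancel_left r two_pos]
  ring

lemma pow_v {m k v : ℕ} (hm : m + 1 = 4 * k) (hF : Fintype.card F = 3 ^ m)
    (hv : v = (3 ^ k - 1) * (3 ^ (2 * k) + 1) + (3 ^ m - 1) / 2) (y : F) :
    (y ^ (3 ^ k + 1)) ^ v = y ^ 2 := by
  have hvo := v_odd hm hv
  by_cases hy : y = 0
  · subst hy
    rw [zero_pow (by positivity), zero_pow hvo.pos.ne', zero_pow two_ne_zero]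
  · obtain ⟨t, ht⟩ := v_mul hm hv
    apply mul_right_cancel₀ hy
    rw [← pow_mul, ← pow_succ, ht, pow_add, pow_mul, pow_mul, ← hF, FiniteField.pow_card,
      FiniteField.pow_card_sub_one_eq_one y hy]
    ring

lemma pow_v_inj {m k v : ℕ} (hm : m + 1 = 4 * k) (hF : Fintype.card F = 3 ^ m)
    (hv : v = (3 ^ k - 1) * (3 ^ (2 * k) + 1) + (3 ^ m - 1) / 2) :
    Function.Injective (fun x : F => x ^ v) := by
  have hvo := v_odd hm hv
  have := charP3 (F := F)
  intro x y hxy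
  simp only at hxy
  by_cases hy : y = 0
  · subst hy
    rw [zero_pow hvo.pos.ne'] at hxy
    exact pow_eq_zero_iff hvo.pos.ne' |>.1 hxy
  · have h1 : (x / y) ^ v = 1 := by rw [div_pow, hxy, div_self (pow_ne_zero _ hy)]
    have h2 := pow_v hm hF hv (x / y)
    rw [pow_right_comm, h1, one_pow] at h2
    rcases mul_self_eq_one_iff.1 ((sq (x / y)).symm.trans h2.symm) with h | h
    · exact (div_eq_one_iff_eq hy).1 h
    · rw [h, hvo.neg_one_pow] at h1
      have h3 : (3 : F) = 0 := by exact_mod_cast CharP.cast_eq_zero F 3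
      exact absurd (show (1 : F) = 0 by linear_combination h3 + h1) one_ne_zero

/-- the exponential sum (twice the real part) -/
noncomputable def X (v : ℕ) (a b : F) : ℤ := ∑ x, E (Tr (a * x) + Tr (b * x ^ v))

lemma X_eq {m k v : ℕ} (hm : m + 1 = 4 * k) (hF : Fintype.card F = 3 ^ m)
    (hv : v = (3 ^ k - 1) * (3 ^ (2 * k) + 1) + (3 ^ m - 1) / 2) (a b : F) :
    X v a b = ∑ y, E (Q k a b y) := by
  have hvo := v_odd hm hv
  let e : F ≃ F := Equiv.ofBijective _ (Finite.injective_iff_bijective.1 (pow_v_inj hm hF hv))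
  have he : ∀ x, e x = x ^ v := fun _ => rfl
  have h1 : X v a b = ∑ s, E (Tr (a * e.symm s) + Tr (b * s)) := by
    rw [← Equiv.sum_comp e]
    simp only [Equiv.symm_apply_apply]
    rfl
  have h2 := sum_sq (by omega) hF (fun s => E (Tr (a * e.symm s) + Tr (b * s)))
  have h3 : ∀ y : F, e.symm (y ^ 2) = y ^ (3 ^ k + 1) := by
    intro y
    rw [Equiv.symm_apply_eq, he, pow_v hm hF hv]
  have h4 : ∀ y : F, e.symm (-y ^ 2) = -y ^ (3 ^ k + 1) := by
    intro y
    rw [Equiv.symm_apply_eq, he, hvo.neg_pow, pow_v hm hF hv]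
  rw [← h1] at h2
  simp only [h3, h4] at h2
  have h5 : ∀ y : F, E (Tr (a * y ^ (3 ^ k + 1)) + Tr (b * y ^ 2)) = E (Q k a b y) := by
    intro y; simp only [Q, Tr, map_add]
  have h6 : ∀ y : F, E (Tr (a * -y ^ (3 ^ k + 1)) + Tr (b * -y ^ 2)) = E (Q k a b y) := by
    intro y
    rw [← E_neg (Q k a b y)]
    congr 1
    simp only [Q, Tr, map_add, mul_neg, map_neg]; ring
  simp only [h5, h6] at h2
  linarith

lemma X_zero (v : ℕ) : X v (0 : F) 0 = 2 * Fintype.card F := by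
  simp [X, E]; ring

open Classical in
lemma sum_ab (x y : F) :
    ∑ p : F × F, E (Tr (p.1 * x) + Tr (p.2 * y)) =
      if x = 0 ∧ y = 0 then 2 * (Fintype.card F : ℤ) ^ 2 else 0 := by
  split_ifs with h
  · simp [h.1, h.2, E]; ring
  · by_cases hx : x = 0
    · have hy : y ≠ 0 := fun hy => h ⟨hx, hy⟩
      rw [Fintype.sum_prod_type]
      exact Finset.sum_eq_zero fun a _ => sum_E_lin (Tr (a * x)) y hy
    · rw [Fintype.sum_prod_type_right]
      refine Finset.sum_eq_zero fun b _ => ?_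
      rw [← sum_E_lin (Tr (b * y)) x hx]
      exact Finset.sum_congr rfl fun a _ => by rw [add_comm]

open Classical in
lemma sum_X {v : ℕ} (hvo : Odd v) :
    ∑ p : F × F, X v p.1 p.2 = 2 * (Fintype.card F : ℤ) ^ 2 := by
  simp only [X]
  rw [Finset.sum_comm]
  simp only [sum_ab]
  have : ∀ x : F, (x = 0 ∧ x ^ v = 0) ↔ x = 0 := fun x =>
    ⟨fun h => h.1, fun h => ⟨h, by rw [h, zero_pow hvo.pos.ne']⟩⟩
  simp only [this, Finset.sum_ite_eq', Finset.mem_univ, if_true]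

open Classical in
lemma sum_X_sq {v : ℕ} (hvo : Odd v) :
    ∑ p : F × F, X v p.1 p.2 ^ 2 = 4 * (Fintype.card F : ℤ) ^ 3 := by
  have h1 : ∀ p : F × F, X v p.1 p.2 ^ 2 = ∑ x, ∑ y,
      (E (Tr (p.1 * (x + y)) + Tr (p.2 * (x ^ v + y ^ v))) +
       E (Tr (p.1 * (x - y)) + Tr (p.2 * (x ^ v - y ^ v)))) := by
    intro p
    rw [sq, X, Finset.sum_mul_sum]
    refine Finset.sum_congr rfl fun x _ => Finset.sum_congr rfl fun y _ => ?_
    rw [E_mul]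
    congr 2 <;> simp only [Tr, mul_add, mul_sub, map_add, map_sub] <;> ring
  simp only [h1]
  rw [Finset.sum_comm]
  have h2 : ∀ x : F, ∑ p : F × F, ∑ y,
      (E (Tr (p.1 * (x + y)) + Tr (p.2 * (x ^ v + y ^ v))) +
       E (Tr (p.1 * (x - y)) + Tr (p.2 * (x ^ v - y ^ v)))) = 4 * (Fintype.card F : ℤ) ^ 2 := by
    intro x
    rw [Finset.sum_comm]
    simp only [Finset.sum_add_distrib, sum_ab]
    have e1 : ∀ y : F, (x + y = 0 ∧ x ^ v + y ^ v = 0) ↔ -x = y := fun y =>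
      ⟨fun h => by linear_combination -h.1, fun h => by rw [← h, hvo.neg_pow]; simp⟩
    have e2 : ∀ y : F, (x - y = 0 ∧ x ^ v - y ^ v = 0) ↔ x = y := fun y =>
      ⟨fun h => by linear_combination h.1, fun h => by rw [← h]; simp⟩
    simp only [e1, e2, Finset.sum_ite_eq, Finset.mem_univ, if_true]
    ring
  simp only [h2]
  simp; ring

open Classical in
lemma weight {m : ℕ} (hF : Fintype.card F = 3 ^ m) (α : Fˣ)
    (hα : ∀ x : Fˣ, x ∈ Subgroup.zpowers α) {v : ℕ} (hvo : Odd v) (a b : F) :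
    3 * (hammingNorm (fun i : Fin (3 ^ m - 1) => Tr (a * (α : F) ^ (i : ℕ)) +
        Tr (b * (α : F) ^ ((i : ℕ) * v))) : ℤ) = 2 * 3 ^ m - X v a b := by
  have hcard : Fintype.card Fˣ = 3 ^ m - 1 := by rw [Fintype.card_units, hF]
  have hord : orderOf α = 3 ^ m - 1 := by
    rw [orderOf_eq_card_of_forall_mem_zpowers hα, Nat.card_eq_fintype_card, hcard]
  let f : Fin (3 ^ m - 1) → Fˣ := fun i => α ^ (i : ℕ)
  have hf : Function.Bijective f := by
    rw [Fintype.bijective_iff_injective_and_card]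
    refine ⟨fun i j hij => ?_, by rw [hcard, Fintype.card_fin]⟩
    exact Fin.ext (pow_injOn_Iio_orderOf (by simp [hord]) (by simp [hord]) hij)
  let g : F → ℤ := fun x => E (Tr (a * x) + Tr (b * x ^ v))
  have h1 : X v a b = 2 + ∑ u : Fˣ, g u := by
    have e1 : ∑ u : Fˣ, g u = ∑ x : {x : F // x ≠ 0}, g x :=
      Fintype.sum_equiv unitsEquivNeZero _ _ (fun u => rfl)
    have e0 : g 0 = 2 := by simp [g, E, zero_pow hvo.pos.ne']
    have e2 : X v a b = ∑ x, g x := rfl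
    rw [e2, e1, ← e0, Fintype.sum_eq_add_sum_subtype_ne g 0]
  have h2 : ∑ u : Fˣ, g u = ∑ i, g (f i) := (hf.sum_comp (fun u : Fˣ => g u)).symm
  have h3 : ∀ t : ZMod 3, E t = 2 - 3 * (if t ≠ 0 then 1 else 0) := by decide
  rw [h1, h2, hammingNorm]
  simp only [g, h3, f, Units.val_pow_eq_pow_val, ← pow_mul]
  rw [Finset.sum_sub_distrib, ← Finset.mul_sum, Finset.sum_boole]
  have : (1 : ℕ) ≤ 3 ^ m := Nat.one_le_pow _ _ (by norm_num)
  simp [Nat.cast_sub this]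
  ring

end

/-- the combinatorial final step -/
lemma count {ι : Type*} [Fintype ι] [DecidableEq ι] (x : ι → ℤ) (r : ℤ) (hr : 3 ≤ r) (o : ι)
    (ho : x o = 6 * r ^ 2) (hx : ∀ i, i ≠ o → x i = 0 ∨ x i ^ 2 = 36 * r ^ 2)
    (hc : (Fintype.card ι : ℤ) = 9 * r ^ 4)
    (h1 : ∑ i, x i = 18 * r ^ 4) (h2 : ∑ i, x i ^ 2 = 108 * r ^ 6) (t : ℤ) :
    2 * ((Finset.univ.filter fun i => x i = t).card : ℤ) =
      if t = 6 * r ^ 2 then 2 else if t = 6 * r then (3 * r ^ 2 - 1) * (r ^ 2 + r)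
      else if t = 0 then 2 * ((3 * r ^ 2 - 1) * (3 * r ^ 2 - r ^ 2 + 1))
      else if t = -6 * r then (3 * r ^ 2 - 1) * (r ^ 2 - r) else 0 := by
  have hr2 : r < r ^ 2 := by nlinarith
  have hx' : ∀ i, (i = o ∧ x i = 6 * r ^ 2) ∨ (i ≠ o ∧ x i = 0) ∨ (i ≠ o ∧ x i = 6 * r) ∨
      (i ≠ o ∧ x i = -6 * r) := by
    intro i
    by_cases h : i = o
    · left; exact ⟨h, h ▸ ho⟩
    · rcases hx i h with h' | h'
      · tauto
      · have : (x i - 6 * r) * (x i + 6 * r) = 0 := by linear_combination h'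
        rcases mul_eq_zero.1 this with hh | hh
        · right; right; left; exact ⟨h, by linarith⟩
        · right; right; right; exact ⟨h, by linarith⟩
  have hcard : ∀ t, ((Finset.univ.filter fun i => x i = t).card : ℤ) = ∑ i, if x i = t then 1 else 0 := by
    intro t; rw [Finset.sum_boole]; 
  set P : ℤ := ∑ i, if x i = 6 * r then 1 else 0 with hP
  set M : ℤ := ∑ i, if x i = -6 * r then 1 else 0 with hM
  set Z : ℤ := ∑ i, if x i = 0 then 1 else 0 with hZ
  have ho1 : ∑ i, (if i = o then (1 : ℤ) else 0) = 1 := by simp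
  have eq1 : 18 * r ^ 4 = 6 * r ^ 2 + 6 * r * (P - M) := by
    rw [← h1]
    calc ∑ i, x i = ∑ i, (6 * r ^ 2 * (if i = o then (1 : ℤ) else 0) + 6 * r * ((if x i = 6 * r then 1 else 0) - (if x i = -6 * r then 1 else 0))) := by
          refine Finset.sum_congr rfl fun i _ => ?_
          rcases hx' i with ⟨h, h'⟩ | ⟨h, h'⟩ | ⟨h, h'⟩ | ⟨h, h'⟩ <;> rw [h'] <;> simp only [h] <;> split_ifs <;> first | (exfalso; linarith) | (exfalso; assumption) | ring
      _ = _ := by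
          rw [Finset.sum_add_distrib, ← Finset.mul_sum, ← Finset.mul_sum, Finset.sum_sub_distrib, ho1]; ring
  have eq2 : 108 * r ^ 6 = 36 * r ^ 4 + 36 * r ^ 2 * (P + M) := by
    rw [← h2]
    calc ∑ i, x i ^ 2 = ∑ i, (36 * r ^ 4 * (if i = o then (1 : ℤ) else 0) + 36 * r ^ 2 * ((if x i = 6 * r then 1 else 0) + (if x i = -6 * r then 1 else 0))) := by
          refine Finset.sum_congr rfl fun i _ => ?_
          rcases hx' i with ⟨h, h'⟩ | ⟨h, h'⟩ | ⟨h, h'⟩ | ⟨h, h'⟩ <;> rw [h'] <;> simp only [h] <;> split_ifs <;> first | (exfalso; linarith) | (exfalso; assumption) | ring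
      _ = _ := by
          rw [Finset.sum_add_distrib, ← Finset.mul_sum, ← Finset.mul_sum, Finset.sum_add_distrib, ho1]; ring
  have eq0 : 9 * r ^ 4 = 1 + Z + P + M := by
    rw [← hc]
    calc (Fintype.card ι : ℤ) = ∑ i : ι, (1 : ℤ) := by simp
      _ = ∑ i, ((if i = o then (1 : ℤ) else 0) + (if x i = 0 then 1 else 0) + (if x i = 6 * r then 1 else 0) + (if x i = -6 * r then 1 else 0)) := by
          refine Finset.sum_congr rfl fun i _ => ?_
          rcases hx' i with ⟨h, h'⟩ | ⟨h, h'⟩ | ⟨h, h'⟩ | ⟨h, h'⟩ <;> rw [h'] <;> simp only [h] <;> split_ifs <;> first | (exfalso; linarith) | (exfalso; assumption) | ring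
      _ = _ := by
          rw [Finset.sum_add_distrib, Finset.sum_add_distrib, Finset.sum_add_distrib, ho1]
  have d1 : P - M = 3 * r ^ 3 - r := by
    apply mul_left_cancel₀ (show 6 * r ≠ 0 by linarith)
    linear_combination -eq1
  have d2 : P + M = 3 * r ^ 4 - r ^ 2 := by
    apply mul_left_cancel₀ (show 36 * r ^ 2 ≠ 0 by nlinarith)
    linear_combination -eq2
  split_ifs with t1 t2 t3 t4
  · have : (Finset.univ.filter fun i => x i = t) = {o} := by
      ext i
      simp only [Finset.mem_filter, Finset.mem_univ, true_and, Finset.mem_singleton, t1]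
      constructor
      · intro h
        rcases hx' i with h' | h' | h' | h'
        · exact h'.1
        all_goals (exfalso; linarith [h'.2])
      · rintro rfl; exact ho
    rw [this]; simp
  · rw [hcard, t2]; linear_combination d1 + d2
  · rw [hcard, t3]; linear_combination -2 * eq0 - 2 * d2
  · rw [hcard, t4]; linear_combination d2 - d1
  · have : (Finset.univ.filter fun i => x i = t) = ∅ := by
      ext i
      simp only [Finset.mem_filter, Finset.mem_univ, true_and, Finset.notMem_empty, iff_false]
      rintro rfl
      have := hx' i
      tauto
    rw [this]; simp

end Stmt18

/-- weight distribution (Table II) of the ternary cyclic code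
`C_{(1,v,3,m)}` with `m ≡ 3 (mod 4)` and
`v = (3^{(m+1)/4}-1)(3^{(m+1)/2}+1) + (3^m-1)/2`; codewords are
`c(a,b)_i = Tr(a α^i) + Tr(b α^{iv})`. -/
theorem stmt18 {m : ℕ} (hm : m % 4 = 3)
    {F : Type*} [Field F] [Fintype F] [Algebra (ZMod 3) F]
    (hF : Fintype.card F = 3 ^ m)
    (α : Fˣ) (hα : ∀ x : Fˣ, x ∈ Subgroup.zpowers α)
    (v : ℕ)
    (hv : v = (3 ^ ((m + 1) / 4) - 1) * (3 ^ ((m + 1) / 2) + 1) + (3 ^ m - 1) / 2)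
    (c : F × F → Fin (3 ^ m - 1) → ZMod 3)
    (hc : c = fun (ab : F × F) (i : Fin (3 ^ m - 1)) =>
      Algebra.trace (ZMod 3) F (ab.1 * (α : F) ^ (i : ℕ)) +
        Algebra.trace (ZMod 3) F (ab.2 * (α : F) ^ ((i : ℕ) * v))) :
    ∀ w : ℕ,
      {ab : F × F | hammingNorm (c ab) = w}.ncard =
        if w = 0 then 1
        else if w = 2 * (3 ^ (m - 1) - 3 ^ ((m - 1) / 2)) then
          (3 ^ m - 1) * (3 ^ (m - 1) + 3 ^ ((m - 1) / 2)) / 2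
        else if w = 2 * 3 ^ (m - 1) then
          (3 ^ m - 1) * (3 ^ m - 3 ^ (m - 1) + 1)
        else if w = 2 * (3 ^ (m - 1) + 3 ^ ((m - 1) / 2)) then
          (3 ^ m - 1) * (3 ^ (m - 1) - 3 ^ ((m - 1) / 2)) / 2
        else 0 := by
  classical
  have hvk : v = (3 ^ ((m + 1) / 4) - 1) * (3 ^ (2 * ((m + 1) / 4)) + 1) + (3 ^ m - 1) / 2 := by
    rw [hv, show (m + 1) / 2 = 2 * ((m + 1) / 4) by omega]
  have hmk : m + 1 = 4 * ((m + 1) / 4) := by omega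
  clear hv
  generalize (m + 1) / 4 = k at *
  have hvo := Stmt18.v_odd hmk hvk
  intro w
  have hset : {ab : F × F | hammingNorm (c ab) = w}.ncard =
      (Finset.univ.filter fun p : F × F =>
        Stmt18.X v p.1 p.2 = 2 * 3 ^ m - 3 * (w : ℤ)).card := by
    rw [← Set.ncard_coe_finset]
    congr 1
    ext p
    have := Stmt18.weight hF α hα hvo p.1 p.2
    simp only [Set.mem_ofPred_eq, Finset.coe_filter, Finset.mem_univ, true_and, hc]
    constructor
    · intro h
      rw [h] at this
      linarith
    · intro h
      rw [h] at this
      have h2 : (hammingNorm (fun i : Fin (3 ^ m - 1) => Stmt18.Tr (p.1 * (α : F) ^ (i : ℕ)) +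
        Stmt18.Tr (p.2 * (α : F) ^ ((i : ℕ) * v))) : ℤ) = w := by linarith
      exact_mod_cast h2
  rw [hset]
  obtain ⟨r, hr⟩ : ∃ r : ℕ, r = 3 ^ ((m - 1) / 2) := ⟨_, rfl⟩
  have hr1 : 3 ^ (m - 1) = r ^ 2 := by
    rw [hr, ← pow_mul]; congr 1; omega
  have hr2 : 3 ^ m = 3 * r ^ 2 := by
    rw [← hr1, ← pow_succ']; congr 1; omega
  have hr2z : (3 : ℤ) ^ m = 3 * (r : ℤ) ^ 2 := by exact_mod_cast hr2
  have hr3 : 3 ≤ r := by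
    rw [hr]
    calc 3 = 3 ^ 1 := by norm_num
      _ ≤ _ := Nat.pow_le_pow_right (by norm_num) (by omega)
  have hcardz : (Fintype.card F : ℤ) = 3 * (r : ℤ) ^ 2 := by
    rw [hF]; push_cast; exact hr2z
  have hcount := Stmt18.count (fun p : F × F => Stmt18.X v p.1 p.2) (r : ℤ)
    (by exact_mod_cast hr3) (0, 0)
    (by rw [Stmt18.X_zero, hcardz]; ring)
    (by
      intro p hp
      have hab : p.1 ≠ 0 ∨ p.2 ≠ 0 := by
        by_contra! h
        exact hp (Prod.ext h.1 h.2)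
      have := Stmt18.quad_sum hmk hF p.1 p.2 hab
      rw [← Stmt18.X_eq hmk hF hvk, pow_succ (3 : ℤ) m, hr2z] at this
      rcases this with h | h
      · exact Or.inl h
      · right; rw [h]; ring)
    (by rw [Fintype.card_prod]; push_cast; rw [hcardz]; ring)
    (by rw [Stmt18.sum_X hvo, hcardz]; ring)
    (by rw [Stmt18.sum_X_sq hvo, hcardz]; ring)
    (2 * 3 ^ m - 3 * (w : ℤ))
  rw [hr2z] at hcount ⊢
  rw [hr2, hr1, ← hr]
  have hrr : r ≤ r ^ 2 := Nat.le_self_pow two_ne_zero r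
  generalize (Finset.univ.filter fun p : F × F =>
        Stmt18.X v p.1 p.2 = 2 * (3 * (r : ℤ) ^ 2) - 3 * (w : ℤ)).card = N at *
  have hpos : 1 ≤ 3 * r ^ 2 := by omega
  have hle2 : r ^ 2 ≤ 3 * r ^ 2 := by omega
  have c1 : (2 * (3 * (r : ℤ) ^ 2) - 3 * (w : ℤ) = 6 * (r : ℤ) ^ 2) ↔ w = 0 := by
    constructor <;> intro h <;> [(zify; linarith); (rw [h]; push_cast; ring)]
  have c2 : (2 * (3 * (r : ℤ) ^ 2) - 3 * (w : ℤ) = 6 * (r : ℤ)) ↔ w = 2 * (r ^ 2 - r) := by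
    zify [hrr]
    constructor <;> intro h <;> linarith
  have c3 : (2 * (3 * (r : ℤ) ^ 2) - 3 * (w : ℤ) = 0) ↔ w = 2 * r ^ 2 := by
    zify
    constructor <;> intro h <;> linarith
  have c4 : (2 * (3 * (r : ℤ) ^ 2) - 3 * (w : ℤ) = -6 * (r : ℤ)) ↔ w = 2 * (r ^ 2 + r) := by
    zify
    constructor <;> intro h <;> linarith
  simp only [c1, c2, c3, c4] at hcount
  split_ifs at hcount ⊢
  · omega
  · symm
    apply Nat.div_eq_of_eq_mul_right two_pos
    zify [hpos]
    linarith
  · zify [hpos, hle2]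
    linarith
  · symm
    apply Nat.div_eq_of_eq_mul_right two_pos
    zify [hpos, hrr]
    linarith
  · omega
end
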